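/- arXiv:0902.0132 — 2 statements merged into one kernel-verified Lean document; each statement's English description precedes it below -/
import Mathlib

section
/- For every integer k ≥ 2 and every finite simple graph G, there is a finite simple graph H with k nodes such that δ_□(G, H) ≤ 10/√(log₂ k). -/
open MeasureTheory Set Filter

/-- The Lebesgue measure restricted to `[0,1]`. -/
noncomputable abbrev μ01 : MeasureTheory.Measure ℝ :=
  MeasureTheory.volume.restrict (Set.Icc (0:ℝ) 1)

/-- A graphon: a symmetric measurable function `[0,1]² → [0,1]`
(defined on all of `ℝ²` for convenience). -/
def IsGraphon (W : ℝ → ℝ → ℝ) : Prop :=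
  Measurable (Function.uncurry W) ∧ (∀ x y, W x y = W y x) ∧ ∀ x y, W x y ∈ Set.Icc (0:ℝ) 1

-- The homomorphism density `t(F,W)` of a finite simple graph `F` in a graphon `W`.
open scoped Classical in
noncomputable def homDensity {n : ℕ} (F : SimpleGraph (Fin n)) (W : ℝ → ℝ → ℝ) : ℝ :=
  ∫ x : Fin n → ℝ,
    (∏ p ∈ Finset.univ.filter (fun p : Fin n × Fin n => p.1 < p.2 ∧ F.Adj p.1 p.2),
      W (x p.1) (x p.2)) ∂(MeasureTheory.Measure.pi fun _ => μ01)

/-- The cut norm `‖U‖_□` of a kernel `U`. -/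
noncomputable def cutNorm (U : ℝ → ℝ → ℝ) : ℝ :=
  sSup { r : ℝ | ∃ S T : Set ℝ, MeasurableSet S ∧ MeasurableSet T ∧
    S ⊆ Set.Icc (0:ℝ) 1 ∧ T ⊆ Set.Icc (0:ℝ) 1 ∧
    r = |∫ x in S, ∫ y in T, U x y| }

/-- An invertible measure preserving map of `[0,1]` onto itself. -/
def IsInvMeasurePreserving (φ : ℝ → ℝ) : Prop :=
  Set.MapsTo φ (Set.Icc (0:ℝ) 1) (Set.Icc (0:ℝ) 1) ∧
  MeasureTheory.MeasurePreserving φ μ01 μ01 ∧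
  ∃ ψ : ℝ → ℝ, Set.MapsTo ψ (Set.Icc (0:ℝ) 1) (Set.Icc (0:ℝ) 1) ∧
    MeasureTheory.MeasurePreserving ψ μ01 μ01 ∧
    (∀ x ∈ Set.Icc (0:ℝ) 1, ψ (φ x) = x) ∧ (∀ x ∈ Set.Icc (0:ℝ) 1, φ (ψ x) = x)

/-- The cut distance `δ_□(U,W)` between two graphons. -/
noncomputable def cutDist (U W : ℝ → ℝ → ℝ) : ℝ :=
  sInf { r : ℝ | ∃ φ : ℝ → ℝ, IsInvMeasurePreserving φ ∧
    r = cutNorm (fun x y => U x y - W (φ x) (φ y)) }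

-- The step-function graphon `W_G` associated with a finite simple graph `G` on `{0,…,n−1}`,
-- using the intervals `J_i = [i/n, (i+1)/n)`.
open scoped Classical in
noncomputable def graphonOf {n : ℕ} (G : SimpleGraph (Fin n)) : ℝ → ℝ → ℝ :=
  fun x y =>
    if ∃ i j : Fin n, G.Adj i j ∧
        x ∈ Set.Ico (((i : ℕ) : ℝ) / n) ((((i : ℕ) : ℝ) + 1) / n) ∧
        y ∈ Set.Ico (((j : ℕ) : ℝ) / n) ((((j : ℕ) : ℝ) + 1) / n)
    then 1 else 0

-- The homomorphism density `t(F,G) = hom(F,G)/|V(G)|^{|V(F)|}` for finite simple graphs.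
open scoped Classical in
noncomputable def homDensityFin {m n : ℕ} (F : SimpleGraph (Fin m)) (G : SimpleGraph (Fin n)) : ℝ :=
  (Fintype.card { f : Fin m → Fin n // ∀ i j, F.Adj i j → G.Adj (f i) (f j) } : ℝ) / (n : ℝ) ^ m

/-!
By the weak regularity lemma of Frieze and Kannan, the vertices of `G` split into at most `4 ^ t`
classes such that averaging `G` over the blocks of this partition costs at most `1 / √(t + 1)` in
cut norm. Indeed, splitting all classes along a rectangle on which the block averages are off by
`ε` captures `ε ^ 2` more of the energy of `G`.

After blowing up so that `k` divides the number of vertices and sorting the vertices by class, cut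
the order into `k` equal runs. All but `4 ^ t` of the runs lie in one class, so replacing every run
by the class of its first vertex leaves a weighted graph on `k` nodes and costs `2 * 4 ^ t / k`.
Rounding its edge weights at random, with Hoeffding's inequality and a union bound over the `4 ^ k`
rectangles, costs `3 / √k`. The choice `t = ⌊(log₂ k) / 4⌋` keeps all three costs of order
`1 / √(log₂ k)`.
-/

section MatrixCutNorm

variable {ι κ ι' κ' : Type*}

/-- The unnormalised cut norm of a real matrix: the largest absolute value of the sum of the
entries in a combinatorial rectangle. -/
noncomputable def matrixCutNorm (M : Matrix ι κ ℝ) : ℝ :=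
  ⨆ P : Finset ι × Finset κ, |∑ i ∈ P.1, ∑ j ∈ P.2, M i j|

theorem matrixCutNorm_le {M : Matrix ι κ ℝ} {B : ℝ}
    (h : ∀ S T, |∑ i ∈ S, ∑ j ∈ T, M i j| ≤ B) : matrixCutNorm M ≤ B :=
  ciSup_le fun P ↦ h P.1 P.2

section Finite

variable [Finite ι] [Finite κ]

theorem abs_sum_le_matrixCutNorm (M : Matrix ι κ ℝ) (S : Finset ι) (T : Finset κ) :
    |∑ i ∈ S, ∑ j ∈ T, M i j| ≤ matrixCutNorm M :=
  le_ciSup (f := fun P : Finset ι × Finset κ ↦ |∑ i ∈ P.1, ∑ j ∈ P.2, M i j|)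
    (Set.finite_range _).bddAbove (S, T)

theorem matrixCutNorm_nonneg (M : Matrix ι κ ℝ) : 0 ≤ matrixCutNorm M :=
  (abs_nonneg _).trans (abs_sum_le_matrixCutNorm M ∅ ∅)

theorem exists_matrixCutNorm_eq (M : Matrix ι κ ℝ) :
    ∃ S T, matrixCutNorm M = |∑ i ∈ S, ∑ j ∈ T, M i j| := by
  obtain ⟨P, hP⟩ :=
    exists_eq_ciSup_of_finite (f := fun P : Finset ι × Finset κ ↦ |∑ i ∈ P.1, ∑ j ∈ P.2, M i j|)
  exact ⟨P.1, P.2, hP.symm⟩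

theorem matrixCutNorm_add_le (M N : Matrix ι κ ℝ) :
    matrixCutNorm (M + N) ≤ matrixCutNorm M + matrixCutNorm N := by
  refine matrixCutNorm_le fun S T ↦ ?_
  simp only [Matrix.add_apply, Finset.sum_add_distrib]
  exact (abs_add_le _ _).trans
    (add_le_add (abs_sum_le_matrixCutNorm M S T) (abs_sum_le_matrixCutNorm N S T))

end Finite

section Fintype

variable [Fintype ι] [Fintype κ]

theorem matrixCutNorm_le_sum_abs (M : Matrix ι κ ℝ) :
    matrixCutNorm M ≤ ∑ i, ∑ j, |M i j| := by
  refine matrixCutNorm_le fun S T ↦ ?_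
  calc |∑ i ∈ S, ∑ j ∈ T, M i j|
      ≤ ∑ i ∈ S, ∑ j ∈ T, |M i j| :=
        (Finset.abs_sum_le_sum_abs _ _).trans
          (Finset.sum_le_sum fun i _ ↦ Finset.abs_sum_le_sum_abs _ _)
    _ ≤ ∑ i ∈ S, ∑ j, |M i j| :=
        Finset.sum_le_sum fun i _ ↦
          Finset.sum_le_univ_sum_of_nonneg fun j ↦ abs_nonneg _
    _ ≤ ∑ i, ∑ j, |M i j| :=
        Finset.sum_le_univ_sum_of_nonneg fun i ↦ Finset.sum_nonneg fun j _ ↦ abs_nonneg _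

theorem sum_mul_le_of_forall_sum_le {a c : ι → ℝ} {α B : ℝ} (ha₀ : ∀ i, 0 ≤ a i)
    (ha : ∀ i, a i ≤ α) (hα : 0 ≤ α) (hc : ∀ S : Finset ι, ∑ i ∈ S, c i ≤ B) :
    ∑ i, a i * c i ≤ α * B := by
  calc ∑ i, a i * c i
      ≤ ∑ i, if 0 ≤ c i then α * c i else 0 := by
        refine Finset.sum_le_sum fun i _ ↦ ?_
        split_ifs with hi
        · exact mul_le_mul_of_nonneg_right (ha i) hi
        · exact mul_nonpos_of_nonneg_of_nonpos (ha₀ i) (not_le.mp hi).le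
    _ = α * ∑ i with 0 ≤ c i, c i := by rw [Finset.mul_sum, Finset.sum_filter]
    _ ≤ α * B := mul_le_mul_of_nonneg_left (hc _) hα

theorem abs_sum_mul_le_of_forall_abs_sum_le {a c : ι → ℝ} {α B : ℝ} (ha₀ : ∀ i, 0 ≤ a i)
    (ha : ∀ i, a i ≤ α) (hα : 0 ≤ α) (hc : ∀ S : Finset ι, |∑ i ∈ S, c i| ≤ B) :
    |∑ i, a i * c i| ≤ α * B := by
  refine abs_le'.mpr ⟨sum_mul_le_of_forall_sum_le ha₀ ha hα fun S ↦ (abs_le'.mp (hc S)).1, ?_⟩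
  simpa only [mul_neg, Finset.sum_neg_distrib] using
    sum_mul_le_of_forall_sum_le (c := fun i ↦ -c i) ha₀ ha hα fun S ↦ by
      simpa only [Finset.sum_neg_distrib] using (abs_le'.mp (hc S)).2

theorem abs_bilin_le_mul_matrixCutNorm (M : Matrix ι κ ℝ) {a : ι → ℝ} {b : κ → ℝ} {α β : ℝ}
    (ha₀ : ∀ i, 0 ≤ a i) (ha : ∀ i, a i ≤ α) (hα : 0 ≤ α)
    (hb₀ : ∀ j, 0 ≤ b j) (hb : ∀ j, b j ≤ β) (hβ : 0 ≤ β) :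
    |∑ i, a i * ∑ j, b j * M i j| ≤ α * (β * matrixCutNorm M) := by
  refine abs_sum_mul_le_of_forall_abs_sum_le ha₀ ha hα fun S ↦ ?_
  have hswap : ∑ i ∈ S, ∑ j, b j * M i j = ∑ j, b j * ∑ i ∈ S, M i j := by
    rw [Finset.sum_comm]
    simp only [Finset.mul_sum]
  rw [hswap]
  refine abs_sum_mul_le_of_forall_abs_sum_le hb₀ hb hβ fun T ↦ ?_
  rw [Finset.sum_comm]
  exact abs_sum_le_matrixCutNorm M S T

end Fintype

theorem matrixCutNorm_submatrix_le [Finite ι] [Finite κ] [DecidableEq ι] [DecidableEq κ]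
    [Fintype ι'] [Fintype κ'] (M : Matrix ι κ ℝ) {r : ι' → ι} {s : κ' → κ}
    {a b : ℕ} (hr : ∀ i, Finset.card {x | r x = i} ≤ a)
    (hs : ∀ j, Finset.card {y | s y = j} ≤ b) :
    matrixCutNorm (M.submatrix r s) ≤ a * (b * matrixCutNorm M) := by
  cases nonempty_fintype ι
  cases nonempty_fintype κ
  refine matrixCutNorm_le fun S T ↦ ?_
  have hfiber : ∑ x ∈ S, ∑ y ∈ T, M.submatrix r s x y =
      ∑ i, (Finset.card {x ∈ S | r x = i} : ℝ) *
        ∑ j, (Finset.card {y ∈ T | s y = j} : ℝ) * M i j := by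
    simp only [Matrix.submatrix_apply, ← Finset.sum_fiberwise S r, ← Finset.sum_fiberwise T s]
    refine Finset.sum_congr rfl fun i _ ↦ ?_
    rw [← nsmul_eq_mul]
    refine Finset.sum_eq_card_nsmul fun x hx ↦ Finset.sum_congr rfl fun j _ ↦ ?_
    rw [← nsmul_eq_mul]
    refine Finset.sum_eq_card_nsmul fun y hy ↦ ?_
    rw [(Finset.mem_filter.mp hx).2, (Finset.mem_filter.mp hy).2]
  rw [hfiber]
  refine abs_bilin_le_mul_matrixCutNorm M (fun i ↦ by positivity) (fun i ↦ ?_) (by positivity)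
    (fun j ↦ by positivity) (fun j ↦ ?_) (by positivity)
  · exact_mod_cast (Finset.card_le_card (Finset.filter_subset_filter _ S.subset_univ)).trans (hr i)
  · exact_mod_cast (Finset.card_le_card (Finset.filter_subset_filter _ T.subset_univ)).trans (hs j)

theorem matrixCutNorm_submatrix_sub_submatrix_le {α V : Type*} [DecidableEq α] [Fintype V]
    {d : Matrix α α ℝ} (hd : ∀ a b, d a b ∈ Icc 0 1) (f g : V → α) :
    matrixCutNorm (d.submatrix f f - d.submatrix g g) ≤
      2 * Fintype.card V * Finset.card {x | f x ≠ g x} := by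
  have hentry : ∀ x y, |d (f x) (f y) - d (g x) (g y)| ≤
      (if f x ≠ g x then 1 else 0) + if f y ≠ g y then 1 else 0 := by
    intro x y
    by_cases hx : f x = g x
    · by_cases hy : f y = g y
      · simp [hx, hy]
      · simpa [hx, hy] using abs_sub_le_of_nonneg_of_le (hd _ _).1 (hd _ _).2 (hd _ _).1 (hd _ _).2
    · refine (abs_sub_le_of_nonneg_of_le (hd _ _).1 (hd _ _).2 (hd _ _).1 (hd _ _).2).trans ?_
      rw [if_pos hx]
      split_ifs <;> norm_num
  calc matrixCutNorm (d.submatrix f f - d.submatrix g g)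
      ≤ ∑ x, ∑ y, |d (f x) (f y) - d (g x) (g y)| := matrixCutNorm_le_sum_abs _
    _ ≤ ∑ x, ∑ y, ((if f x ≠ g x then (1 : ℝ) else 0) + if f y ≠ g y then 1 else 0) :=
        Finset.sum_le_sum fun x _ ↦ Finset.sum_le_sum fun y _ ↦ hentry x y
    _ = 2 * Fintype.card V * Finset.card {x | f x ≠ g x} := by
        simp only [Finset.sum_add_distrib, Finset.sum_const, Finset.card_univ, Finset.sum_boole,
          nsmul_eq_mul, ← Finset.mul_sum]
        ring

end MatrixCutNorm

section FiberAverage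

open scoped BigOperators

variable {Z κ κ' : Type*} [Fintype Z]

open scoped Classical in
/-- The average of `w` over the fibre of `g` above `c`, with value `0` on an empty fibre. -/
noncomputable def fiberAverage (g : Z → κ) (w : Z → ℝ) (c : κ) : ℝ :=
  𝔼 z with g z = c, w z

theorem fiberAverage_mem_Icc {g : Z → κ} {w : Z → ℝ} (hw : ∀ z, w z ∈ Icc 0 1) (c : κ) :
    fiberAverage g w c ∈ Icc 0 1 := by
  classical
  refine ⟨Finset.expect_nonneg fun z _ ↦ (hw z).1, ?_⟩
  rcases Finset.eq_empty_or_nonempty {z | g z = c} with h | h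
  · simp [fiberAverage, h]
  · exact Finset.expect_le h fun z _ ↦ (hw z).2

theorem sum_sub_fiberAverage_mul_comp (g : Z → κ) (w : Z → ℝ) (h : κ → ℝ) :
    ∑ z, (w z - fiberAverage g w (g z)) * h (g z) = 0 := by
  classical
  rw [← Finset.sum_fiberwise_of_maps_to
    (t := Finset.univ.image g) fun z _ ↦ Finset.mem_image_of_mem g (Finset.mem_univ z)]
  refine Finset.sum_eq_zero fun c _ ↦ ?_
  calc ∑ z with g z = c, (w z - fiberAverage g w (g z)) * h (g z)
      = ∑ z with g z = c, (w z - fiberAverage g w c) * h c :=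
        Finset.sum_congr rfl fun z hz ↦ by rw [(Finset.mem_filter.mp hz).2]
    _ = 0 := by
        rw [← Finset.sum_mul, Finset.sum_sub_distrib, Finset.sum_const, nsmul_eq_mul,
          fiberAverage, Finset.card_mul_expect, sub_self, zero_mul]

/-- The squared `ℓ²` distance from `w` to its averages over the fibres of `g`: the part of the
energy of `w` which the partition into fibres does not capture. -/
noncomputable def residualEnergy (g : Z → κ) (w : Z → ℝ) : ℝ :=
  ∑ z, (w z - fiberAverage g w (g z)) ^ 2

theorem residualEnergy_nonneg (g : Z → κ) (w : Z → ℝ) : 0 ≤ residualEnergy g w :=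
  Finset.sum_nonneg fun _ _ ↦ sq_nonneg _

theorem sum_sub_comp_sq_eq_residualEnergy_add (g : Z → κ) (w : Z → ℝ) (c : κ → ℝ) :
    ∑ z, (w z - c (g z)) ^ 2 =
      residualEnergy g w + ∑ z, (fiberAverage g w (g z) - c (g z)) ^ 2 := by
  have horth := sum_sub_fiberAverage_mul_comp g w fun a ↦ 2 * (fiberAverage g w a - c a)
  rw [residualEnergy, ← Finset.sum_add_distrib, ← sub_eq_zero, ← Finset.sum_sub_distrib, ← horth]
  exact Finset.sum_congr rfl fun z _ ↦ by ring

theorem residualEnergy_le_sum_sq (g : Z → κ) (w : Z → ℝ) : residualEnergy g w ≤ ∑ z, w z ^ 2 := by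
  have hpyth := sum_sub_comp_sq_eq_residualEnergy_add g w 0
  simp only [Pi.zero_apply, sub_zero] at hpyth
  exact hpyth ▸ le_add_of_nonneg_right (Finset.sum_nonneg fun _ _ ↦ sq_nonneg _)

theorem residualEnergy_sub_residualEnergy {g : Z → κ} {g' : Z → κ'} (w : Z → ℝ) {π : κ' → κ}
    (hπ : ∀ z, π (g' z) = g z) :
    residualEnergy g w - residualEnergy g' w =
      ∑ z, (fiberAverage g' w (g' z) - fiberAverage g w (g z)) ^ 2 := by
  have hpyth := sum_sub_comp_sq_eq_residualEnergy_add g' w (fiberAverage g w ∘ π)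
  simp only [Function.comp_apply, hπ] at hpyth
  rw [residualEnergy, hpyth, add_sub_cancel_left]

theorem sq_sum_sub_fiberAverage_le {g : Z → κ} {g' : Z → κ'} (w : Z → ℝ) {π : κ' → κ}
    (hπ : ∀ z, π (g' z) = g z) {ρ : κ' → Prop} {R : Finset Z} (hR : ∀ z, z ∈ R ↔ ρ (g' z)) :
    (∑ z ∈ R, (w z - fiberAverage g w (g z))) ^ 2 ≤
      R.card * (residualEnergy g w - residualEnergy g' w) := by
  classical
  have hcoarse : ∑ z ∈ R, (w z - fiberAverage g w (g z)) =
      ∑ z ∈ R, (fiberAverage g' w (g' z) - fiberAverage g w (g z)) := by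
    have horth := sum_sub_fiberAverage_mul_comp g' w fun a ↦ if ρ a then 1 else 0
    simp only [← hR, mul_ite, mul_one, mul_zero, ← Finset.sum_filter,
      Finset.filter_univ_mem] at horth
    rw [← sub_eq_zero, ← Finset.sum_sub_distrib, ← horth]
    exact Finset.sum_congr rfl fun z _ ↦ by ring
  rw [hcoarse, residualEnergy_sub_residualEnergy w hπ]
  refine sq_sum_le_card_mul_sum_sq.trans (mul_le_mul_of_nonneg_left ?_ (Nat.cast_nonneg _))
  exact Finset.sum_le_univ_sum_of_nonneg fun _ ↦ sq_nonneg _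

end FiberAverage

section WeakRegularity

variable {V κ : Type*} [Fintype V]

/-- The quotient of the matrix `W` by the partition into fibres of `f`: its entries are the
averages of `W` over the blocks of the partition. -/
noncomputable def blockAverage (f : V → κ) (W : Matrix V V ℝ) : Matrix κ κ ℝ :=
  Matrix.of fun a b ↦ fiberAverage (Prod.map f f) (Function.uncurry W) (a, b)

theorem blockAverage_mem_Icc {W : Matrix V V ℝ} (hW : ∀ x y, W x y ∈ Icc 0 1) (f : V → κ)
    (a b : κ) : blockAverage f W a b ∈ Icc 0 1 :=
  fiberAverage_mem_Icc (w := Function.uncurry W) (fun p ↦ hW p.1 p.2) (a, b)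

theorem isSymm_blockAverage {W : Matrix V V ℝ} (hW : W.IsSymm) (f : V → κ) :
    (blockAverage f W).IsSymm := by
  refine Matrix.IsSymm.ext fun a b ↦ Finset.expect_equiv (Equiv.prodComm V V) ?_ ?_
  · simp [and_comm]
  · exact fun p _ ↦ (hW.apply p.1 p.2).symm

theorem exists_refinement_matrixCutNorm_sq_le (W : Matrix V V ℝ) {m : ℕ} (f : V → Fin m) :
    ∃ f' : V → Fin (m * 4),
      matrixCutNorm (W - (blockAverage f W).submatrix f f) ^ 2 ≤
        Fintype.card V ^ 2 * (residualEnergy (Prod.map f f) (Function.uncurry W) -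
          residualEnergy (Prod.map f' f') (Function.uncurry W)) := by
  classical
  obtain ⟨S, T, hST⟩ := exists_matrixCutNorm_eq (W - (blockAverage f W).submatrix f f)
  let e : Fin m × Bool × Bool ≃ Fin (m * 4) := Fintype.equivFinOfCardEq (by simp)
  let f' : V → Fin (m * 4) := fun x ↦ e (f x, decide (x ∈ S), decide (x ∈ T))
  have hcoarsens (z : V × V) : Prod.map (fun c ↦ (e.symm c).1) (fun c ↦ (e.symm c).1)
      (Prod.map f' f' z) = Prod.map f f z := by
    simp [f', Prod.map]
  have hdrop := sq_sum_sub_fiberAverage_le (g := Prod.map f f) (g' := Prod.map f' f')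
    (Function.uncurry W) hcoarsens (R := S ×ˢ T)
    (ρ := fun c ↦ (e.symm c.1).2.1 ∧ (e.symm c.2).2.2) (fun z ↦ by simp [f'])
  have hcard : ((S ×ˢ T).card : ℝ) ≤ Fintype.card V ^ 2 := by
    rw [sq, ← Nat.cast_mul, ← Fintype.card_prod]
    exact_mod_cast Finset.card_le_univ _
  refine ⟨f', ?_⟩
  rw [hST, sq_abs,
    ← Finset.sum_product (f := fun p ↦ (W - (blockAverage f W).submatrix f f) p.1 p.2)]
  refine hdrop.trans (mul_le_mul_of_nonneg_right hcard ?_)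
  rw [residualEnergy_sub_residualEnergy _ hcoarsens]
  exact Finset.sum_nonneg fun _ _ ↦ sq_nonneg _

theorem weak_regularity (W : Matrix V V ℝ) (t : ℕ) :
    ∃ m ≤ 4 ^ t, ∃ f : V → Fin m,
      (t + 1) * matrixCutNorm (W - (blockAverage f W).submatrix f f) ^ 2 ≤
        Fintype.card V ^ 2 * ∑ x, ∑ y, W x y ^ 2 := by
  let E {m : ℕ} (f : V → Fin m) : ℝ := residualEnergy (Prod.map f f) (Function.uncurry W)
  choose R hR using fun (i : ℕ) (f : V → Fin (4 ^ i)) ↦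
    pow_succ 4 i ▸ exists_refinement_matrixCutNorm_sq_le W f
  let F (i : ℕ) : V → Fin (4 ^ i) := Nat.rec (fun _ ↦ 0) R i
  let c (i : ℕ) : ℝ := matrixCutNorm (W - (blockAverage (F i) W).submatrix (F i) (F i)) ^ 2
  have htelescope : ∑ i ∈ Finset.range (t + 1), c i ≤ Fintype.card V ^ 2 * ∑ x, ∑ y, W x y ^ 2 := by
    calc ∑ i ∈ Finset.range (t + 1), c i
        ≤ ∑ i ∈ Finset.range (t + 1), (Fintype.card V : ℝ) ^ 2 * (E (F i) - E (F (i + 1))) :=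
          Finset.sum_le_sum fun i _ ↦ hR i (F i)
      _ = Fintype.card V ^ 2 * (E (F 0) - E (F (t + 1))) := by
          rw [← Finset.mul_sum, Finset.sum_range_sub' fun i ↦ E (F i)]
      _ ≤ Fintype.card V ^ 2 * ∑ x, ∑ y, W x y ^ 2 := by
          refine mul_le_mul_of_nonneg_left ?_ (by positivity)
          refine (sub_le_self _ (residualEnergy_nonneg _ _)).trans ?_
          exact (residualEnergy_le_sum_sq _ _).trans_eq (Fintype.sum_prod_type _)
  obtain ⟨i, hi, hmin⟩ := Finset.exists_min_image _ c (Finset.nonempty_range_add_one (n := t))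
  refine ⟨4 ^ i, Nat.pow_le_pow_right (by simp) (Finset.mem_range_succ_iff.mp hi), F i, ?_⟩
  calc (t + 1) * c i = (Finset.range (t + 1)).card • c i := by simp
    _ ≤ ∑ i ∈ Finset.range (t + 1), c i := Finset.card_nsmul_le_sum _ _ _ hmin
    _ ≤ Fintype.card V ^ 2 * ∑ x, ∑ y, W x y ^ 2 := htelescope

theorem exists_matrixCutNorm_sub_blockAverage_le {W : Matrix V V ℝ}
    (hW : ∀ x y, W x y ∈ Icc 0 1) (t : ℕ) :
    ∃ m ≤ 4 ^ t, ∃ f : V → Fin m,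
      matrixCutNorm (W - (blockAverage f W).submatrix f f) ≤ Fintype.card V ^ 2 / √(t + 1) := by
  obtain ⟨m, hm, f, hf⟩ := weak_regularity W t
  refine ⟨m, hm, f, abs_le_of_sq_le_sq' ?_ (by positivity) |>.2⟩
  have hsum : ∑ x, ∑ y, W x y ^ 2 ≤ (Fintype.card V : ℝ) ^ 2 := by
    calc ∑ x, ∑ y, W x y ^ 2
        ≤ ∑ _x : V, ∑ _y : V, (1 : ℝ) := Finset.sum_le_sum fun x _ ↦ Finset.sum_le_sum fun y _ ↦
          pow_le_one₀ (hW x y).1 (hW x y).2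
      _ = (Fintype.card V : ℝ) ^ 2 := by simp [sq]
  rw [div_pow, Real.sq_sqrt (by positivity), le_div_iff₀' (by positivity), sq (_ ^ 2 : ℝ)]
  exact hf.trans (mul_le_mul_of_nonneg_left hsum (by positivity))

end WeakRegularity

section RandomRounding

open ProbabilityTheory

theorem integral_exp_mul_bernoulli_le (p : unitInterval) (y : ℝ) :
    ∫ b, Real.exp (y * (({true} : Set Bool).indicator 1 b - p)) ∂bernoulliMeasure true false p ≤
      Real.exp (y ^ 2 / 8) := by
  have hmean : ∫ b, ({true} : Set Bool).indicator (1 : Bool → ℝ) b ∂bernoulliMeasure true false p =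
      p := by
    simp [integral_bernoulliMeasure]
  have hsub := hasSubgaussianMGF_of_mem_Icc (μ := bernoulliMeasure true false p)
    (X := ({true} : Set Bool).indicator 1) (a := 0) (b := 1)
    (Measurable.of_discrete.aemeasurable) (ae_of_all _ fun b ↦ by cases b <;> simp)
  rw [hmean] at hsub
  refine (hsub.mgf_le y).trans_eq ?_
  norm_num
  ring

variable {E τ : Type*} [Fintype E] [Fintype τ]

theorem exists_set_sum_exp_le (p : E → unitInterval) (a : τ → E → ℝ) :
    ∃ s : Set E, ∑ t, Real.exp (∑ e, a t e * (s.indicator 1 e - p e)) ≤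
      ∑ t, Real.exp ((∑ e, a t e ^ 2) / 8) := by
  let μ : Measure (E → Bool) := Measure.pi fun e ↦ bernoulliMeasure true false (p e)
  let X (t : τ) (x : E → Bool) : ℝ :=
    ∏ e, Real.exp (a t e * (({true} : Set Bool).indicator 1 (x e) - p e))
  have hmoment (t : τ) : ∫ x, X t x ∂μ ≤ Real.exp ((∑ e, a t e ^ 2) / 8) := by
    rw [integral_fintype_prod_eq_prod (𝕜 := ℝ) fun e b ↦
      Real.exp (a t e * (({true} : Set Bool).indicator 1 b - p e)), Finset.sum_div, Real.exp_sum]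
    exact Finset.prod_le_prod (fun e _ ↦ integral_nonneg fun _ ↦ (Real.exp_pos _).le)
      fun e _ ↦ integral_exp_mul_bernoulli_le (p e) (a t e)
  obtain ⟨x, hx⟩ := exists_le_integral (μ := μ) (f := fun x ↦ ∑ t, X t x) .of_finite
  rw [integral_finsetSum _ fun _ _ ↦ .of_finite] at hx
  refine ⟨{e | x e = true}, le_of_eq_of_le ?_
    (hx.trans (Finset.sum_le_sum fun t _ ↦ hmoment t))⟩
  simp only [X, Real.exp_sum]
  rfl

theorem exists_set_forall_sum_mul_le [Nontrivial τ] (p : E → unitInterval) {a : τ → E → ℝ}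
    {v : ℝ} (hv : 0 < v) (ha : ∀ t, ∑ e, a t e ^ 2 ≤ v) :
    ∃ s : Set E, ∀ t, ∑ e, a t e * (s.indicator 1 e - p e) ≤
      √(v * Real.log (Fintype.card τ) / 2) := by
  set L : ℝ := Real.log (Fintype.card τ)
  have hL : 0 < L := Real.log_pos (Nat.one_lt_cast.mpr Fintype.one_lt_card)
  set l : ℝ := √(8 * L / v)
  have hl : l ^ 2 = 8 * L / v := Real.sq_sqrt (by positivity)
  obtain ⟨s, hs⟩ := exists_set_sum_exp_le p fun t e ↦ l * a t e
  let X (t : τ) : ℝ := ∑ e, a t e * (s.indicator 1 e - p e)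
  simp only [mul_assoc, ← Finset.mul_sum, mul_pow] at hs
  have htotal : ∑ t, Real.exp (l * X t) ≤ Real.exp (2 * L) := by
    calc ∑ t, Real.exp (l * X t)
        ≤ ∑ _t : τ, Real.exp L := by
          refine hs.trans (Finset.sum_le_sum fun t _ ↦ Real.exp_le_exp.mpr ?_)
          rw [hl, div_mul_eq_mul_div, div_div, div_le_iff₀ (by positivity)]
          nlinarith [ha t]
      _ = Real.exp (2 * L) := by
          rw [Finset.sum_const, Finset.card_univ, nsmul_eq_mul, two_mul L, Real.exp_add,
            Real.exp_log (Nat.cast_pos.mpr Fintype.card_pos)]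
  refine ⟨s, fun t ↦ le_of_mul_le_mul_left (a := l) ?_ (by positivity)⟩
  calc l * X t ≤ 2 * L := Real.exp_le_exp.mp <|
        (Finset.single_le_sum (f := fun t ↦ Real.exp (l * X t)) (fun _ _ ↦ (Real.exp_pos _).le)
          (Finset.mem_univ t)).trans htotal
    _ = √((2 * L) ^ 2) := (Real.sqrt_sq (by positivity)).symm
    _ = l * √(v * L / 2) := by
        rw [← Real.sqrt_mul (by positivity)]
        congr 1
        field_simp
        norm_num

theorem exists_set_forall_abs_sum_mul_le [Nonempty τ] (p : E → unitInterval) {a : τ → E → ℝ}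
    {v : ℝ} (hv : 0 < v) (ha : ∀ t, ∑ e, a t e ^ 2 ≤ v) :
    ∃ s : Set E, ∀ t, |∑ e, a t e * (s.indicator 1 e - p e)| ≤
      √(v * Real.log (2 * Fintype.card τ) / 2) := by
  obtain ⟨s, hs⟩ := exists_set_forall_sum_mul_le p hv
    (a := fun i : Bool × τ ↦ bif i.1 then a i.2 else -a i.2) (by rintro ⟨_ | _, t⟩ <;> simp [ha])
  rw [Fintype.card_prod, Fintype.card_bool, Nat.cast_mul, Nat.cast_two] at hs
  refine ⟨s, fun t ↦ abs_le'.mpr ⟨hs (true, t), ?_⟩⟩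
  simpa using hs (false, t)

end RandomRounding

section GraphRounding

variable {V : Type*}

open scoped Classical in
theorem card_filter_mk_eq_le_two (R : Finset (V × V)) (e : Sym2 V) :
    Finset.card {z ∈ R | s(z.1, z.2) = e} ≤ 2 := by
  induction e with
  | h x y =>
    refine (Finset.card_le_card fun z hz ↦ ?_).trans
      (Finset.card_le_two (a := (x, y)) (b := (y, x)))
    simpa [Prod.ext_iff] using (Finset.mem_filter.mp hz).2

variable [Fintype V]

open scoped Classical in
theorem sum_card_filter_mk_mul (R : Finset (V × V)) (c : Sym2 V → ℝ) :
    ∑ e, (Finset.card {z ∈ R | s(z.1, z.2) = e} : ℝ) * c e = ∑ z ∈ R, c s(z.1, z.2) := by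
  rw [← Finset.sum_fiberwise R fun z ↦ s(z.1, z.2)]
  refine Finset.sum_congr rfl fun e _ ↦ ?_
  rw [← nsmul_eq_mul]
  exact (Finset.sum_eq_card_nsmul fun z hz ↦ congrArg c (Finset.mem_filter.mp hz).2).symm

open scoped Classical in
theorem sum_card_filter_mk_sq_le (R : Finset (V × V)) :
    ∑ e : Sym2 V, (Finset.card {z ∈ R | s(z.1, z.2) = e} : ℝ) ^ 2 ≤ 2 * Fintype.card V ^ 2 := by
  calc ∑ e : Sym2 V, (Finset.card {z ∈ R | s(z.1, z.2) = e} : ℝ) ^ 2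
      ≤ ∑ e : Sym2 V, (Finset.card {z ∈ R | s(z.1, z.2) = e} : ℝ) * 2 :=
        Finset.sum_le_sum fun e _ ↦ by
          rw [sq]
          exact mul_le_mul_of_nonneg_left (by exact_mod_cast card_filter_mk_eq_le_two R e)
            (Nat.cast_nonneg _)
    _ = 2 * R.card := by
        rw [sum_card_filter_mk_mul R fun _ ↦ 2, Finset.sum_const, nsmul_eq_mul, mul_comm]
    _ ≤ 2 * Fintype.card V ^ 2 := by
        rw [sq, ← Nat.cast_mul, ← Fintype.card_prod]
        exact_mod_cast Nat.mul_le_mul_left 2 R.card_le_univ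

theorem exists_set_matrixCutNorm_sub_indicator_le [Nonempty V] (p : Sym2 V → unitInterval) :
    ∃ s : Set (Sym2 V), matrixCutNorm (Matrix.of fun i j ↦ p s(i, j) - s.indicator 1 s(i, j)) ≤
      2 * (Fintype.card V * √(Fintype.card V)) := by
  classical
  set k : ℝ := (Fintype.card V : ℝ)
  have hk1 : 1 ≤ k := Nat.one_le_cast.mpr Fintype.card_pos
  obtain ⟨s, hs⟩ := exists_set_forall_abs_sum_mul_le p (v := 2 * k ^ 2) (by positivity)
    fun P : Finset V × Finset V ↦ sum_card_filter_mk_sq_le (P.1 ×ˢ P.2)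
  have hlog : Real.log (2 * Fintype.card (Finset V × Finset V)) ≤ 3 * k := by
    have hpow : (2 * Fintype.card (Finset V × Finset V) : ℝ) = 2 ^ (2 * Fintype.card V + 1) := by
      rw [Fintype.card_prod, Fintype.card_finset]
      push_cast
      ring
    rw [hpow, Real.log_pow]
    push_cast
    nlinarith [Real.log_two_lt_d9, Real.log_two_gt_d9]
  refine ⟨s, matrixCutNorm_le fun S T ↦ ?_⟩
  have hsum : ∑ i ∈ S, ∑ j ∈ T, ((p s(i, j) : ℝ) - s.indicator 1 s(i, j)) =
      -∑ e, (Finset.card {z ∈ S ×ˢ T | s(z.1, z.2) = e} : ℝ) * (s.indicator 1 e - p e) := by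
    rw [sum_card_filter_mk_mul _ fun e ↦ s.indicator 1 e - (p e : ℝ), Finset.sum_product,
      ← Finset.sum_neg_distrib]
    simp only [← Finset.sum_neg_distrib, neg_sub]
  simp only [Matrix.of_apply, hsum, abs_neg]
  refine (hs (S, T)).trans (Real.sqrt_le_iff.mpr ⟨by positivity, ?_⟩)
  rw [mul_pow, mul_pow, Real.sq_sqrt (by positivity)]
  nlinarith [mul_le_mul_of_nonneg_left hlog (sq_nonneg k), pow_pos (hk1.trans_lt' one_pos) 3]

open scoped Classical in
theorem exists_simpleGraph_matrixCutNorm_sub_adjMatrix_le [Nonempty V] {P : Matrix V V ℝ}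
    (hsymm : P.IsSymm) (hP : ∀ i j, P i j ∈ Icc 0 1) :
    ∃ H : SimpleGraph V, matrixCutNorm (P - H.adjMatrix ℝ) ≤
      3 * (Fintype.card V * √(Fintype.card V)) := by
  let p : Sym2 V → unitInterval :=
    Sym2.lift ⟨fun i j ↦ ⟨P i j, hP i j⟩, fun i j ↦ Subtype.ext (hsymm.apply j i)⟩
  obtain ⟨s, hs⟩ := exists_set_matrixCutNorm_sub_indicator_le p
  let D : Matrix V V ℝ := Matrix.diagonal fun i ↦ s.indicator 1 s(i, i)
  obtain ⟨H, hH⟩ : ∃ H : SimpleGraph V, ∀ i j, H.Adj i j ↔ s(i, j) ∈ s ∧ i ≠ j :=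
    ⟨SimpleGraph.fromEdgeSet s, fun _ _ ↦ Iff.rfl⟩
  have hsplit : P - H.adjMatrix ℝ =
      (Matrix.of fun i j ↦ (p s(i, j) : ℝ) - s.indicator 1 s(i, j)) + D := by
    ext i j
    by_cases hij : i = j <;>
      simp [D, p, hij, hH, SimpleGraph.adjMatrix_apply, Set.indicator_apply]
  have hD : matrixCutNorm D ≤ Fintype.card V * √(Fintype.card V) := by
    calc matrixCutNorm D
        ≤ ∑ i, ∑ j, |D i j| := matrixCutNorm_le_sum_abs D
      _ = ∑ i, |s.indicator 1 s(i, i)| :=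
          Finset.sum_congr rfl fun i _ ↦ by simp [D, Matrix.diagonal_apply, apply_ite abs]
      _ ≤ ∑ i : V, 1 := Finset.sum_le_sum fun i _ ↦ by
          by_cases hi : s(i, i) ∈ s <;> simp [hi]
      _ ≤ Fintype.card V * √(Fintype.card V) := by
          have hcard : (1 : ℝ) ≤ Fintype.card V := Nat.one_le_cast.mpr Fintype.card_pos
          rw [Finset.sum_const, Finset.card_univ, nsmul_eq_mul]
          exact mul_le_mul_of_nonneg_left (Real.one_le_sqrt.mpr hcard) (by positivity)
  refine ⟨H, ?_⟩
  rw [hsplit]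
  linarith [matrixCutNorm_add_le (Matrix.of fun i j ↦ (p s(i, j) : ℝ) - s.indicator 1 s(i, j)) D]

end GraphRounding

section Sorting

variable {α : Type*} [Fintype α] [LinearOrder α] {k n : ℕ}

theorem card_filter_divNat_eq_le (j : Fin k) :
    Finset.card {i : Fin (k * n) | i.divNat = j} ≤ n := by
  calc Finset.card {i : Fin (k * n) | i.divNat = j}
      ≤ Finset.card (Finset.univ : Finset (Fin n)) := by
        refine Finset.card_le_card_of_injOn Fin.modNat (fun _ _ ↦ Finset.mem_univ _)
          fun a ha b hb hab ↦ ?_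
        simp only [Finset.coe_filter, Finset.mem_univ, true_and, Set.mem_ofPred_eq] at ha hb
        exact finProdFinEquiv.symm.injective (Prod.ext (ha.trans hb.symm) hab)
    _ = n := Finset.card_fin n

theorem card_filter_ne_divNat_le_of_monotone [NeZero n] {F : Fin (k * n) → α} (hF : Monotone F) :
    Finset.card {i | F i ≠ F (finProdFinEquiv (i.divNat, 0))} ≤ Fintype.card α * n := by
  have hfirst (i : Fin (k * n)) : F (finProdFinEquiv (i.divNat, 0)) ≤ F i :=
    hF (Fin.mk_le_of_le_val (by simpa using Nat.mul_div_le i n))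
  have hlt {a b : Fin (k * n)} (hab : a.divNat < b.divNat)
      (hb : F b ≠ F (finProdFinEquiv (b.divNat, 0))) : F a ≠ F b := by
    have hle : a ≤ finProdFinEquiv (b.divNat, 0) := by
      refine Fin.mk_le_of_le_val ?_
      have hstart : n * (a / n + 1) ≤ n * (b / n) := Nat.mul_le_mul_left n hab
      have hend := Nat.lt_mul_div_succ a (NeZero.pos n)
      simpa using (hend.trans_le hstart).le
    exact ((hF hle).trans_lt ((hfirst b).lt_of_ne' hb)).ne
  refine (Finset.card_le_card_of_injOn (t := (Finset.univ : Finset (α × Fin n)))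
    (fun i ↦ (F i, i.modNat)) (fun _ _ ↦ Finset.mem_univ _)
    fun a ha b hb hab ↦ ?_).trans_eq (by simp)
  simp only [Finset.coe_filter, Finset.mem_univ, true_and, Set.mem_ofPred_eq] at ha hb
  obtain ⟨hFab, hmod⟩ := Prod.ext_iff.mp hab
  rcases lt_trichotomy a.divNat b.divNat with h | h | h
  · exact absurd hFab (hlt h hb)
  · exact finProdFinEquiv.symm.injective (Prod.ext h hmod)
  · exact absurd hFab.symm (hlt h ha)

theorem exists_equiv_card_filter_ne_divNat_le {ι : Type*} [Fintype ι] [NeZero n]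
    (hι : Fintype.card ι = k * n) (f : ι → α) :
    ∃ (σ : ι ≃ Fin (k * n)) (c : Fin k → α),
      Finset.card {x | f x ≠ c (σ x).divNat} ≤ Fintype.card α * n := by
  let e := Fintype.equivFinOfCardEq hι
  let σ : ι ≃ Fin (k * n) := e.trans (Tuple.sort (f ∘ e.symm)).symm
  let F : Fin (k * n) → α := f ∘ σ.symm
  have hF : Monotone F := Tuple.monotone_sort (f ∘ e.symm)
  refine ⟨σ, fun j ↦ F (finProdFinEquiv (j, 0)),
    le_of_eq_of_le ?_ (card_filter_ne_divNat_le_of_monotone hF)⟩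
  exact Finset.card_equiv σ fun x ↦ by simp [F]

end Sorting

section Core

variable {V : Type*} {k n : ℕ}

theorem matrixCutNorm_submatrix_divNat_le (M : Matrix (Fin k) (Fin k) ℝ) (σ : V ≃ Fin (k * n)) :
    matrixCutNorm (M.submatrix (fun x ↦ (σ x).divNat) fun x ↦ (σ x).divNat) ≤
      n * (n * matrixCutNorm M) := by
  have : Fintype V := Fintype.ofEquiv _ σ.symm
  have hfiber (j : Fin k) : Finset.card {x | (σ x).divNat = j} ≤ n :=
    le_of_eq_of_le (Finset.card_equiv σ fun x ↦ by simp) (card_filter_divNat_eq_le (n := n) j)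
  exact matrixCutNorm_submatrix_le M hfiber hfiber

variable [Fintype V]

theorem exists_equiv_matrixCutNorm_submatrix_sub_submatrix_le {α : Type*} [Fintype α]
    [LinearOrder α] [NeZero n] (hV : Fintype.card V = k * n) {d : Matrix α α ℝ}
    (hd : ∀ a b, d a b ∈ Icc 0 1) (f : V → α) :
    ∃ (σ : V ≃ Fin (k * n)) (c : Fin k → α),
      matrixCutNorm (d.submatrix f f -
          (d.submatrix c c).submatrix (fun x ↦ (σ x).divNat) fun x ↦ (σ x).divNat) ≤
        2 * (k * n) * (Fintype.card α * n) := by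
  obtain ⟨σ, c, hσ⟩ := exists_equiv_card_filter_ne_divNat_le hV f
  refine ⟨σ, c, (matrixCutNorm_submatrix_sub_submatrix_le hd f fun x ↦ c (σ x).divNat).trans ?_⟩
  rw [hV, ← Nat.cast_mul, ← Nat.cast_mul]
  gcongr

open scoped Classical in
theorem exists_simpleGraph_matrixCutNorm_sub_submatrix_le [NeZero k] [NeZero n] {W : Matrix V V ℝ}
    (hsymm : W.IsSymm) (hW : ∀ x y, W x y ∈ Icc 0 1) (hV : Fintype.card V = k * n) (t : ℕ) :
    ∃ (H : SimpleGraph (Fin k)) (σ : V ≃ Fin (k * n)),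
      matrixCutNorm (W - (H.adjMatrix ℝ).submatrix (fun x ↦ (σ x).divNat) fun x ↦ (σ x).divNat) ≤
        (k * n : ℝ) ^ 2 * (1 / √(t + 1) + 2 * 4 ^ t / k + 3 / √k) := by
  have hcard : (Fintype.card V : ℝ) = k * n := by exact_mod_cast hV
  have hk : (0 : ℝ) < k := Nat.cast_pos.mpr (NeZero.pos k)
  obtain ⟨m, hm, f, hregular⟩ := exists_matrixCutNorm_sub_blockAverage_le hW t
  set d := blockAverage f W
  have hd := blockAverage_mem_Icc hW f
  obtain ⟨σ, c, hσ⟩ := exists_equiv_matrixCutNorm_submatrix_sub_submatrix_le hV hd f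
  set q : V → Fin k := fun x ↦ (σ x).divNat
  set d' := d.submatrix c c
  obtain ⟨H, hH⟩ := exists_simpleGraph_matrixCutNorm_sub_adjMatrix_le
    ((isSymm_blockAverage hsymm f).submatrix c) fun i j ↦ hd (c i) (c j)
  have hsorted : matrixCutNorm (d.submatrix f f - d'.submatrix q q) ≤
      (k * n : ℝ) ^ 2 * (2 * 4 ^ t / k) := by
    calc matrixCutNorm (d.submatrix f f - d'.submatrix q q)
        ≤ 2 * (k * n) * (m * n) := by simpa only [Fintype.card_fin] using hσ
      _ ≤ 2 * (k * n) * (4 ^ t * n) := by gcongr; exact_mod_cast hm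
      _ = (k * n : ℝ) ^ 2 * (2 * 4 ^ t / k) := by field_simp
  have hrounded : matrixCutNorm ((d' - H.adjMatrix ℝ).submatrix q q) ≤
      (k * n : ℝ) ^ 2 * (3 / √k) := by
    refine (matrixCutNorm_submatrix_divNat_le _ σ).trans ?_
    rw [Fintype.card_fin] at hH
    calc (n : ℝ) * (n * matrixCutNorm (d' - H.adjMatrix ℝ))
        ≤ n * (n * (3 * (k * √k))) := by gcongr
      _ = (k * n : ℝ) ^ 2 * (3 / √k) := by
        field_simp
        rw [Real.sq_sqrt hk.le]
  refine ⟨H, σ, ?_⟩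
  rw [hcard, ← mul_one_div] at hregular
  calc matrixCutNorm (W - (H.adjMatrix ℝ).submatrix q q)
      = matrixCutNorm (W - d.submatrix f f + (d.submatrix f f - d'.submatrix q q) +
          (d' - H.adjMatrix ℝ).submatrix q q) := by
        congr 1 with x y
        simp [d']
    _ ≤ _ + _ + _ := (matrixCutNorm_add_le _ _).trans (by grw [matrixCutNorm_add_le])
    _ ≤ (k * n : ℝ) ^ 2 * (1 / √(t + 1) + 2 * 4 ^ t / k + 3 / √k) := by
        rw [mul_add, mul_add]
        exact add_le_add (add_le_add hregular hsorted) hrounded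

theorem inv_sqrt_floor_add_le {k : ℕ} (hk : 2 ≤ k) :
    1 / √((⌊Real.logb 2 k / 4⌋₊ : ℝ) + 1) + 2 * 4 ^ ⌊Real.logb 2 k / 4⌋₊ / k + 3 / √k ≤
      7 / √(Real.logb 2 k) := by
  set L := Real.logb 2 k
  set t := ⌊L / 4⌋₊
  have hk0 : (0 : ℝ) < k := by positivity
  have hL : 0 < L := Real.logb_pos one_lt_two (by exact_mod_cast hk)
  have hLk : L ≤ k := by
    rw [Real.logb_le_iff_le_rpow one_lt_two hk0, Real.rpow_natCast]
    exact_mod_cast Nat.lt_two_pow_self.le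
  have hroot : 1 / √k ≤ 1 / √L :=
    one_div_le_one_div_of_le (Real.sqrt_pos.mpr hL) (Real.sqrt_le_sqrt hLk)
  have hregular : 1 / √((t : ℝ) + 1) ≤ 2 * (1 / √L) := by
    have hle : √L / 2 ≤ √((t : ℝ) + 1) := by
      rw [Real.le_sqrt (by positivity) (by positivity), div_pow, Real.sq_sqrt hL.le]
      linarith [Nat.lt_floor_add_one (L / 4)]
    calc 1 / √((t : ℝ) + 1) ≤ 1 / (√L / 2) := one_div_le_one_div_of_le (by positivity) hle
      _ = 2 * (1 / √L) := by field_simp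
  have hpow : (4 : ℝ) ^ t ≤ √k := by
    rw [Real.le_sqrt (by positivity) hk0.le, ← pow_mul, show (4 : ℝ) = 2 ^ 2 by norm_num,
      ← pow_mul, ← Real.rpow_natCast, ← Real.le_logb_iff_rpow_le one_lt_two hk0]
    push_cast
    linarith [Nat.floor_le (show 0 ≤ L / 4 by positivity)]
  have hsorted : 2 * (4 : ℝ) ^ t / k ≤ 2 * (1 / √k) := by
    calc 2 * (4 : ℝ) ^ t / k ≤ 2 * √k / k := by gcongr
      _ = 2 * (1 / √k) := by rw [mul_div_assoc, Real.sqrt_div_self']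
  calc _ ≤ 2 * (1 / √L) + 2 * (1 / √k) + 3 * (1 / √k) := by
        rw [div_eq_mul_one_div 3]
        gcongr
    _ ≤ 7 / √L := by rw [div_eq_mul_one_div 7]; linarith

end Core

section StepKernel

variable {m n : ℕ}

/-- The `i`-th of the `n` intervals of length `1 / n` which tile `[0,1)`. -/
def cell (i : Fin n) : Set ℝ :=
  Ico (((i : ℕ) : ℝ) / n) ((((i : ℕ) : ℝ) + 1) / n)

theorem mem_cell_iff {i : Fin n} {x : ℝ} : x ∈ cell i ↔ ⌊(n : ℝ) * x⌋ = (i : ℕ) := by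
  have hn : (0 : ℝ) < n := Nat.cast_pos.mpr i.pos
  rw [cell, mem_Ico, div_le_iff₀' hn, lt_div_iff₀' hn, Int.floor_eq_iff, Int.cast_natCast]

theorem eq_of_mem_cell {i j : Fin n} {x : ℝ} (hi : x ∈ cell i) (hj : x ∈ cell j) : i = j := by
  rw [mem_cell_iff] at hi hj
  exact Fin.ext (Nat.cast_injective (hi.symm.trans hj))

theorem measurableSet_cell (i : Fin n) : MeasurableSet (cell i) :=
  measurableSet_Ico

theorem volume_real_cell (i : Fin n) : volume.real (cell i) = 1 / n := by
  have hn : (0 : ℝ) < n := Nat.cast_pos.mpr i.pos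
  rw [cell, Real.volume_real_Ico_of_le (by gcongr; linarith)]
  ring

theorem indicator_cell_of_mem {i : Fin n} {x : ℝ} (hx : x ∈ cell i) (j : Fin n) :
    (cell j).indicator (1 : ℝ → ℝ) x = if j = i then 1 else 0 := by
  split_ifs with h
  · rw [h, indicator_of_mem hx, Pi.one_apply]
  · exact indicator_of_notMem (fun hj ↦ h (eq_of_mem_cell hj hx)) _

/-- The kernel which is constant on the product of each two cells, with the entries of `A` as
values, and which vanishes off `[0,1)²`. -/
noncomputable def stepKernel (A : Matrix (Fin n) (Fin n) ℝ) (x y : ℝ) : ℝ :=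
  ∑ i, (cell i).indicator 1 x * ∑ j, (cell j).indicator 1 y * A i j

theorem stepKernel_apply (A : Matrix (Fin n) (Fin n) ℝ) {i j : Fin n} {x y : ℝ} (hx : x ∈ cell i)
    (hy : y ∈ cell j) : stepKernel A x y = A i j := by
  simp [stepKernel, indicator_cell_of_mem hx, indicator_cell_of_mem hy]

theorem stepKernel_eq_zero (A : Matrix (Fin n) (Fin n) ℝ) {x y : ℝ}
    (h : ¬∃ i j : Fin n, x ∈ cell i ∧ y ∈ cell j) : stepKernel A x y = 0 := by
  refine Finset.sum_eq_zero fun i _ ↦ ?_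
  rw [Finset.mul_sum]
  refine Finset.sum_eq_zero fun j _ ↦ ?_
  by_cases hx : x ∈ cell i
  · rw [indicator_of_notMem fun hy ↦ h ⟨i, j, hx, hy⟩, zero_mul, mul_zero]
  · rw [indicator_of_notMem hx, zero_mul]

theorem stepKernel_sub (A B : Matrix (Fin n) (Fin n) ℝ) (x y : ℝ) :
    stepKernel (A - B) x y = stepKernel A x y - stepKernel B x y := by
  simp [stepKernel, mul_sub, Finset.sum_sub_distrib]

theorem stepKernel_comp (A : Matrix (Fin n) (Fin n) ℝ) {φ : ℝ → ℝ} {r : Fin m → Fin n}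
    (h : ∀ x i, φ x ∈ cell i ↔ ∃ p, x ∈ cell p ∧ r p = i) (x y : ℝ) :
    stepKernel A (φ x) (φ y) = stepKernel (A.submatrix r r) x y := by
  by_cases hxy : ∃ p q : Fin m, x ∈ cell p ∧ y ∈ cell q
  · obtain ⟨p, q, hp, hq⟩ := hxy
    rw [stepKernel_apply _ hp hq, stepKernel_apply A ((h x _).mpr ⟨p, hp, rfl⟩)
      ((h y _).mpr ⟨q, hq, rfl⟩), Matrix.submatrix_apply]
  · rw [stepKernel_eq_zero _ hxy, stepKernel_eq_zero]
    rintro ⟨i, j, hi, hj⟩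
    obtain ⟨p, hp, -⟩ := (h x i).mp hi
    obtain ⟨q, hq, -⟩ := (h y j).mp hj
    exact hxy ⟨p, q, hp, hq⟩

theorem mem_cell_iff_exists_divNat [NeZero m] (x : ℝ) (i : Fin n) :
    x ∈ cell i ↔ ∃ p : Fin (n * m), x ∈ cell p ∧ p.divNat = i := by
  have hfloor : ⌊(n : ℝ) * x⌋ = ⌊((n * m : ℕ) : ℝ) * x⌋ / m := by
    rw [← Int.floor_div_natCast]
    congr 1
    rw [Nat.cast_mul, mul_right_comm, mul_div_cancel_right₀ _ (NeZero.ne (m : ℝ))]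
  simp only [mem_cell_iff, hfloor]
  constructor
  · intro hi
    have hm : (0 : ℤ) < m := Nat.cast_pos.mpr (NeZero.pos m)
    obtain ⟨z, hz⟩ := Int.eq_ofNat_of_zero_le
      ((Int.ediv_nonneg_iff_of_pos hm).mp (hi ▸ Int.natCast_nonneg i))
    rw [hz] at hi ⊢
    have hzi : z / m = i := by exact_mod_cast hi
    exact ⟨⟨z, (Nat.div_lt_iff_lt_mul (NeZero.pos m)).mp (hzi ▸ i.isLt)⟩, rfl, Fin.ext hzi⟩
  · rintro ⟨p, hp, rfl⟩
    rw [hp, Fin.coe_divNat, Int.natCast_ediv]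

theorem stepKernel_submatrix_divNat [NeZero m] (A : Matrix (Fin n) (Fin n) ℝ) :
    stepKernel (A.submatrix (Fin.divNat (n := m)) Fin.divNat) = stepKernel A :=
  funext₂ fun x y ↦ (stepKernel_comp A (φ := id) mem_cell_iff_exists_divNat x y).symm

open scoped Classical in
theorem graphonOf_eq_stepKernel (G : SimpleGraph (Fin n)) :
    graphonOf G = stepKernel (G.adjMatrix ℝ) := by
  funext x y
  by_cases hxy : ∃ i j : Fin n, x ∈ cell i ∧ y ∈ cell j
  · obtain ⟨i, j, hi, hj⟩ := hxy
    rw [stepKernel_apply _ hi hj, SimpleGraph.adjMatrix_apply]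
    refine if_congr ⟨?_, fun h ↦ ⟨i, j, h, hi, hj⟩⟩ rfl rfl
    rintro ⟨a, b, hab, ha, hb⟩
    rwa [eq_of_mem_cell hi ha, eq_of_mem_cell hj hb]
  · rw [stepKernel_eq_zero _ hxy]
    exact if_neg fun ⟨i, j, _, hi, hj⟩ ↦ hxy ⟨i, j, hi, hj⟩

theorem setIntegral_sum_indicator_cell_mul (S : Set ℝ) (c : Fin n → ℝ) :
    ∫ x in S, ∑ i, (cell i).indicator 1 x * c i = ∑ i, volume.real (cell i ∩ S) * c i := by
  have hint (i : Fin n) : Integrable ((cell i).indicator (1 : ℝ → ℝ)) (volume.restrict S) :=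
    (integrable_indicator_iff (measurableSet_cell i)).mpr
      (integrableOn_const (s := cell i) measure_Ico_lt_top.ne).restrict
  rw [integral_finsetSum _ fun i _ ↦ (hint i).mul_const (c i)]
  refine Finset.sum_congr rfl fun i _ ↦ ?_
  rw [integral_mul_const, integral_indicator_one (measurableSet_cell i),
    measureReal_restrict_apply (measurableSet_cell i)]

theorem setIntegral_setIntegral_stepKernel (A : Matrix (Fin n) (Fin n) ℝ) (S T : Set ℝ) :
    ∫ x in S, ∫ y in T, stepKernel A x y =
      ∑ i, volume.real (cell i ∩ S) * ∑ j, volume.real (cell j ∩ T) * A i j := by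
  rw [← setIntegral_sum_indicator_cell_mul]
  congr 1 with x
  have hswap (u : Fin n → ℝ) : ∑ i, (cell i).indicator 1 x * ∑ j, u j * A i j =
      ∑ j, u j * ∑ i, (cell i).indicator 1 x * A i j := by
    simp only [Finset.mul_sum]
    rw [Finset.sum_comm]
    exact Finset.sum_congr rfl fun j _ ↦ Finset.sum_congr rfl fun i _ ↦ mul_left_comm _ _ _
  simp only [stepKernel, hswap, setIntegral_sum_indicator_cell_mul]

theorem cutNorm_stepKernel_le (A : Matrix (Fin n) (Fin n) ℝ) :
    cutNorm (stepKernel A) ≤ matrixCutNorm A / n ^ 2 := by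
  have hnonneg : 0 ≤ matrixCutNorm A / n ^ 2 := div_nonneg (matrixCutNorm_nonneg A) (by positivity)
  have hcell (S : Set ℝ) (i : Fin n) : volume.real (cell i ∩ S) ≤ 1 / n :=
    volume_real_cell i ▸ measureReal_mono inter_subset_left measure_Ico_lt_top.ne
  refine Real.sSup_le ?_ hnonneg
  rintro r ⟨S, T, -, -, -, -, rfl⟩
  rw [setIntegral_setIntegral_stepKernel]
  refine (abs_bilin_le_mul_matrixCutNorm A (fun _ ↦ measureReal_nonneg) (hcell S) (by positivity)
    (fun _ ↦ measureReal_nonneg) (hcell T) (by positivity)).trans_eq ?_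
  ring

end StepKernel

section Rearrangement

variable {ι : Type*} [Countable ι] [MeasurableSpace ι] [MeasurableSingletonClass ι]

theorem tsum_measure_inter_preimage_singleton {α : Type*} [MeasurableSpace α] (μ : Measure α)
    {f : α → ι} (hf : Measurable f) (B : Set α) : ∑' i, μ (B ∩ f ⁻¹' {i}) = μ B := by
  have hsum := tsum_measure_preimage_singleton (μ := μ.restrict B) countable_univ (f := f)
    fun i _ ↦ hf (measurableSet_singleton i)
  rw [preimage_univ, Measure.restrict_apply_univ, tsum_univ fun i ↦ μ.restrict B (f ⁻¹' {i})]
    at hsum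
  rw [← hsum]
  exact tsum_congr fun i ↦ by
    rw [Measure.restrict_apply (hf (measurableSet_singleton i)), inter_comm]

theorem measurePreserving_of_forall_eq_add {G : Type*} [AddGroup G] [MeasurableSpace G]
    [MeasurableAdd G] {μ : Measure G} [μ.IsAddRightInvariant] (E : G ≃ᵐ G) {d : G → ι}
    (hd : Measurable d) (s : ι → G) (hE : ∀ x, E x = x + s (d x)) : MeasurePreserving E μ μ := by
  refine ⟨E.measurable, Measure.ext fun B hB ↦ ?_⟩
  have htranslate (i : ι) :
      E ⁻¹' B ∩ d ⁻¹' {i} = (· + s i) ⁻¹' (B ∩ (d ∘ E.symm) ⁻¹' {i}) := by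
    ext x
    constructor
    · rintro ⟨hx, rfl : d x = i⟩
      rw [mem_preimage, ← hE]
      exact ⟨hx, congrArg d (E.symm_apply_apply x)⟩
    · rintro ⟨hx, hi : d (E.symm (x + s i)) = i⟩
      have hsymm : E.symm (x + s i) = x := by
        have hx := hE (E.symm (x + s i))
        rw [E.apply_symm_apply, hi] at hx
        exact (add_right_cancel hx).symm
      rw [hsymm] at hi
      exact ⟨by rwa [mem_preimage, hE, hi], hi⟩
  rw [Measure.map_apply E.measurable hB, ← tsum_measure_inter_preimage_singleton μ hd,
    ← tsum_measure_inter_preimage_singleton μ (hd.comp E.symm.measurable) B]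
  exact tsum_congr fun i ↦ by rw [htranslate, measure_preimage_add_right]

variable (N : ℕ) [NeZero N]

/-- The rearrangement of the line which translates the interval `[m / N, (m + 1) / N)` onto
`[τ m / N, (τ m + 1) / N)` for every integer `m`. -/
noncomputable def intervalExchange (τ : Equiv.Perm ℤ) : ℝ ≃ᵐ ℝ where
  toFun x := (τ ⌊N * x⌋ + Int.fract (N * x)) / N
  invFun x := (τ.symm ⌊N * x⌋ + Int.fract (N * x)) / N
  left_inv x := by
    have hN : (N : ℝ) ≠ 0 := NeZero.ne _
    simp [mul_div_cancel₀ _ hN, Int.floor_add_fract, hN]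
  right_inv x := by
    have hN : (N : ℝ) ≠ 0 := NeZero.ne _
    simp [mul_div_cancel₀ _ hN, Int.floor_add_fract, hN]
  measurable_toFun := by
    dsimp only [Equiv.coe_fn_mk]
    fun_prop
  measurable_invFun := by
    dsimp only [Equiv.coe_fn_symm_mk]
    fun_prop

variable (τ : Equiv.Perm ℤ)

theorem mul_intervalExchange (x : ℝ) :
    N * intervalExchange N τ x = τ ⌊N * x⌋ + Int.fract (N * x) :=
  mul_div_cancel₀ _ (NeZero.ne (N : ℝ))

theorem floor_mul_intervalExchange (x : ℝ) : ⌊N * intervalExchange N τ x⌋ = τ ⌊N * x⌋ := by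
  rw [mul_intervalExchange, Int.floor_intCast_add, Int.floor_fract, add_zero]

theorem intervalExchange_eq_add (x : ℝ) :
    intervalExchange N τ x = x + ((τ ⌊N * x⌋ - ⌊N * x⌋ : ℤ) : ℝ) / N := by
  have hN : (N : ℝ) ≠ 0 := NeZero.ne _
  refine mul_left_cancel₀ hN ?_
  rw [mul_intervalExchange, mul_add, mul_div_cancel₀ _ hN, Int.cast_sub]
  linarith [Int.floor_add_fract (N * x)]

theorem measurePreserving_intervalExchange : MeasurePreserving (intervalExchange N τ) :=
  measurePreserving_of_forall_eq_add _ (d := fun x ↦ ⌊N * x⌋) (by fun_prop)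
    (fun m : ℤ ↦ ((τ m - m : ℤ) : ℝ) / N) (intervalExchange_eq_add N τ)

theorem floor_mul_mem_Ico_iff {x : ℝ} : ⌊N * x⌋ ∈ Ico (0 : ℤ) N ↔ x ∈ Ico (0 : ℝ) 1 := by
  have hN : (0 : ℝ) < N := Nat.cast_pos.mpr (NeZero.pos N)
  rw [mem_Ico, mem_Ico, Int.floor_nonneg, Int.floor_lt, Int.cast_natCast,
    mul_nonneg_iff_of_pos_left hN, mul_lt_iff_lt_one_right hN]

variable {N τ}

theorem intervalExchange_mem_Icc_iff (hτ : ∀ z ∉ Ico (0 : ℤ) N, τ z = z) (x : ℝ) :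
    intervalExchange N τ x ∈ Icc (0 : ℝ) 1 ↔ x ∈ Icc (0 : ℝ) 1 := by
  by_cases hx : ⌊N * x⌋ ∈ Ico (0 : ℤ) N
  · have hτx : ⌊N * intervalExchange N τ x⌋ ∈ Ico (0 : ℤ) N := by
      rw [floor_mul_intervalExchange]
      by_contra h
      exact h (by rwa [τ.injective (hτ _ h)])
    rw [floor_mul_mem_Ico_iff] at hx hτx
    exact iff_of_true (Ico_subset_Icc_self hτx) (Ico_subset_Icc_self hx)
  · rw [intervalExchange_eq_add, hτ _ hx, sub_self, Int.cast_zero, zero_div, add_zero]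

theorem isInvMeasurePreserving_of_mem_Icc_iff {E : ℝ ≃ᵐ ℝ} (hE : MeasurePreserving E)
    (hIcc : ∀ x, E x ∈ Icc (0 : ℝ) 1 ↔ x ∈ Icc (0 : ℝ) 1) : IsInvMeasurePreserving E := by
  have hpre : E ⁻¹' Icc (0 : ℝ) 1 = Icc 0 1 := ext hIcc
  have hpre' : E.symm ⁻¹' Icc (0 : ℝ) 1 = Icc 0 1 :=
    ext fun x ↦ by rw [mem_preimage, ← hIcc, E.apply_symm_apply]
  have hmp := hE.restrict_preimage (measurableSet_Icc (a := (0 : ℝ)) (b := 1))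
  have hmp' := hE.symm.restrict_preimage (measurableSet_Icc (a := (0 : ℝ)) (b := 1))
  rw [hpre] at hmp
  rw [hpre'] at hmp'
  exact ⟨fun x ↦ (hIcc x).mpr, hmp, E.symm, hpre'.ge, hmp', fun x _ ↦ E.symm_apply_apply x,
    fun x _ ↦ E.apply_symm_apply x⟩

theorem exists_isInvMeasurePreserving_mem_cell_iff {M : ℕ} (e : Fin M ≃ Fin N) :
    ∃ φ, IsInvMeasurePreserving φ ∧ ∀ x i, φ x ∈ cell i ↔ x ∈ cell (e.symm i) := by
  obtain rfl : M = N := Fin.equiv_iff_eq.mp ⟨e⟩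
  let j : Fin M ↪ ℤ := Fin.valEmbedding.trans Nat.castEmbedding
  let τ : Equiv.Perm ℤ := Equiv.Perm.viaEmbedding e j
  have hτ (z : ℤ) (hz : z ∉ Ico (0 : ℤ) M) : τ z = z := by
    refine Equiv.Perm.viaEmbedding_apply_of_notMem e j z fun ⟨i, hi⟩ ↦ hz ?_
    rw [← hi]
    exact ⟨Int.natCast_nonneg i, Int.ofNat_lt.mpr i.isLt⟩
  refine ⟨intervalExchange M τ, isInvMeasurePreserving_of_mem_Icc_iff
    (measurePreserving_intervalExchange M τ) (intervalExchange_mem_Icc_iff hτ), fun x i ↦ ?_⟩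
  have hi : ((i : ℕ) : ℤ) = τ ((e.symm i : ℕ) : ℤ) := by
    simpa [j] using (Equiv.Perm.viaEmbedding_apply e j (e.symm i)).symm
  rw [mem_cell_iff, mem_cell_iff, floor_mul_intervalExchange, hi, τ.apply_eq_iff_eq]

theorem cutDist_le {U W : ℝ → ℝ → ℝ} {φ : ℝ → ℝ} (hφ : IsInvMeasurePreserving φ) :
    cutDist U W ≤ cutNorm fun x y ↦ U x y - W (φ x) (φ y) := by
  refine csInf_le ⟨0, ?_⟩ ⟨φ, hφ, rfl⟩
  rintro r ⟨ψ, -, rfl⟩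
  refine Real.sSup_nonneg ?_
  rintro r ⟨S, T, -, -, -, -, rfl⟩
  exact abs_nonneg _

theorem cutDist_stepKernel_le {M : ℕ} (A : Matrix (Fin M) (Fin M) ℝ) (B : Matrix (Fin N) (Fin N) ℝ)
    (e : Fin M ≃ Fin N) :
    cutDist (stepKernel A) (stepKernel B) ≤ matrixCutNorm (A - B.submatrix e e) / M ^ 2 := by
  obtain ⟨φ, hφ, hcell⟩ := exists_isInvMeasurePreserving_mem_cell_iff e
  have hcomp := stepKernel_comp B (φ := φ) (r := e) fun x i ↦ (hcell x i).trans
    ⟨fun hx ↦ ⟨_, hx, e.apply_symm_apply i⟩, fun ⟨p, hp, hpi⟩ ↦ by rwa [← hpi, e.symm_apply_apply]⟩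
  calc cutDist (stepKernel A) (stepKernel B)
      ≤ cutNorm fun x y ↦ stepKernel A x y - stepKernel B (φ x) (φ y) := cutDist_le hφ
    _ = cutNorm (stepKernel (A - B.submatrix e e)) := by
      congr 1 with x y
      rw [hcomp, stepKernel_sub]
    _ ≤ matrixCutNorm (A - B.submatrix e e) / M ^ 2 := cutNorm_stepKernel_le _

end Rearrangement

theorem approx_by_k_node_graph_general {k n : ℕ} (hk : 2 ≤ k) {A : Matrix (Fin n) (Fin n) ℝ}
    (hsymm : A.IsSymm) (hA : ∀ i j, A i j ∈ Icc (0 : ℝ) 1) :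
    ∃ H : SimpleGraph (Fin k), cutDist (stepKernel A) (graphonOf H) ≤ 7 / √(Real.logb 2 k) := by
  classical
  wlog hn : n ≠ 0 generalizing n
  · obtain rfl := not_not.mp hn
    have hzero : stepKernel A = stepKernel (0 : Matrix (Fin 1) (Fin 1) ℝ) := by
      funext x y
      simp [stepKernel]
    rw [hzero]
    exact this Matrix.isSymm_zero (fun _ _ ↦ by simp) one_ne_zero
  have : NeZero n := ⟨hn⟩
  have : NeZero k := ⟨by lia⟩
  set t := ⌊Real.logb 2 k / 4⌋₊
  set A' := A.submatrix (Fin.divNat (n := k)) Fin.divNat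
  obtain ⟨H, σ, hH⟩ := exists_simpleGraph_matrixCutNorm_sub_submatrix_le (hsymm.submatrix _)
    (fun _ _ ↦ hA _ _) ((Fintype.card_fin (n * k)).trans (mul_comm n k)) t
  set B' := (H.adjMatrix ℝ).submatrix (Fin.divNat (n := n)) Fin.divNat
  refine ⟨H, ?_⟩
  calc cutDist (stepKernel A) (graphonOf H)
      = cutDist (stepKernel A') (stepKernel B') := by
        rw [graphonOf_eq_stepKernel, stepKernel_submatrix_divNat, stepKernel_submatrix_divNat]
    _ ≤ matrixCutNorm (A' - B'.submatrix σ σ) / (n * k : ℕ) ^ 2 := cutDist_stepKernel_le A' B' σ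
    _ ≤ 1 / √((t : ℝ) + 1) + 2 * 4 ^ t / k + 3 / √k := by
        rw [div_le_iff₀' (pow_pos (Nat.cast_pos.mpr (NeZero.pos _)) 2), Nat.cast_mul,
          mul_comm (n : ℝ)]
        exact hH
    _ ≤ 7 / √(Real.logb 2 k) := inv_sqrt_floor_add_le hk

/-- Every finite simple graph can be approximated in cut distance by a graph on `k` nodes
with error `10/√(log₂ k)`. -/
theorem approx_by_k_node_graph (k : ℕ) (hk : 2 ≤ k) {n : ℕ} (G : SimpleGraph (Fin n)) :
    ∃ H : SimpleGraph (Fin k),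
      cutDist (graphonOf G) (graphonOf H) ≤ 10 / Real.sqrt (Real.logb 2 k) := by
  classical
  obtain ⟨H, hH⟩ := approx_by_k_node_graph_general hk (G.isSymm_adjMatrix (α := ℝ)) fun i j ↦ by
    rw [SimpleGraph.adjMatrix_apply]
    split_ifs <;> simp
  exact ⟨H, graphonOf_eq_stepKernel G ▸ hH.trans (by gcongr; norm_num)⟩
end

section
/- A sequence (G_n) of finite simple graphs with |V(G_n)| → ∞ is convergent (i.e., the sequence of real numbers (t(F,G_n))_n converges for every finite simple graph F) if and only if it is a Cauchy sequence in the cut distance δ_□ (i.e., for every ε > 0 there is N such that δ_□(G_m, G_n) ≤ ε for all m, n ≥ N). -/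
open MeasureTheory Set Filter

/-!
Fix a large `k`. The homomorphism densities of `G` determine, by Möbius inversion over supergraphs,
the law of the graph induced on `k` random vertices, so convergence makes the laws of two late
graphs of the sequence agree up to a total error less than `1 / 2`. A graph and its random sample
have, with probability at least `3 / 4`, weakly regular partitions with the same densities and
nearly the same class sizes: weak regularity is tested by four-cycle densities of the residual
kernel, which are averages and hence survive sampling. Two laws so close must charge a common
sample that is good for both graphs. Permuting the vertices of the blow-ups so that
corresponding classes line up then bounds the cut distance.

For the converse, replacing the edges of `F` one at a time changes the density by at most the cut
distance per edge.
-/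

namespace GraphLimit

section Averages

variable {ι κ : Type*} [Fintype ι] [Fintype κ] (w : stdSimplex ℝ ι)

lemma sum_mul_const (c : ℝ) : ∑ x, w x * c = c := by
  rw [← Finset.sum_mul, stdSimplex.sum_eq_one, one_mul]

variable {w}

lemma sum_mul_mono {f g : ι → ℝ} (h : ∀ x, f x ≤ g x) : ∑ x, w x * f x ≤ ∑ x, w x * g x :=
  Finset.sum_le_sum fun x _ => mul_le_mul_of_nonneg_left (h x) (stdSimplex.zero_le w x)

lemma sum_mul_le {f : ι → ℝ} {c : ℝ} (h : ∀ x, f x ≤ c) : ∑ x, w x * f x ≤ c :=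
  (sum_mul_mono h).trans_eq (sum_mul_const w c)

lemma le_sum_mul {f : ι → ℝ} {c : ℝ} (h : ∀ x, c ≤ f x) : c ≤ ∑ x, w x * f x :=
  (sum_mul_const w c).symm.trans_le (sum_mul_mono h)

lemma abs_sum_mul_le {f : ι → ℝ} {c : ℝ} (h : ∀ x, |f x| ≤ c) : |∑ x, w x * f x| ≤ c :=
  abs_le.2 ⟨le_sum_mul fun x => (abs_le.1 (h x)).1, sum_mul_le fun x => (abs_le.1 (h x)).2⟩

variable (w)

lemma sum_mul_pow_le_of_even {n : ℕ} (hn : Even n) (f : ι → ℝ) :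
    (∑ x, w x * f x) ^ n ≤ ∑ x, w x * f x ^ n :=
  Real.pow_arith_mean_le_arith_mean_pow_of_even _ _ _ (fun x _ => stdSimplex.zero_le w x)
    (stdSimplex.sum_eq_one w) hn

lemma sq_sum_mul (f : ι → ℝ) :
    (∑ x, w x * f x) ^ 2 = ∑ x, w x * ∑ x', w x' * (f x * f x') := by
  rw [sq, Finset.sum_mul_sum]
  simp only [Finset.mul_sum]
  exact Finset.sum_congr rfl fun x _ => Finset.sum_congr rfl fun x' _ => by ring

lemma sum_map_mul (π : ι → κ) (g : κ → ℝ) :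
    ∑ p, stdSimplex.map π w p * g p = ∑ x, w x * g (π x) := by
  classical
  simp only [stdSimplex.map_coe, FunOnFinite.linearMap_apply_apply, Finset.sum_mul]
  rw [← Finset.sum_fiberwise Finset.univ π fun x => w x * g (π x)]
  refine Finset.sum_congr rfl fun p _ => Finset.sum_congr rfl fun x hx => ?_
  rw [(Finset.mem_filter.1 hx).2]

lemma map_apply [DecidableEq κ] (π : ι → κ) (p : κ) :
    stdSimplex.map π w p = ∑ x, w x * if π x = p then 1 else 0 := by
  rw [← sum_map_mul w π fun q => if q = p then (1 : ℝ) else 0]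
  simp only [mul_ite, mul_one, mul_zero, Finset.sum_ite_eq', Finset.mem_univ, if_true]

variable {w}

lemma map_eq_of_forall_sum_mul_eq {w' : stdSimplex ℝ κ} {π : ι → κ}
    (h : ∀ g : κ → ℝ, ∑ x, w x * g (π x) = ∑ p, w' p * g p) : stdSimplex.map π w = w' := by
  classical
  ext p
  rw [map_apply, h fun q => if q = p then (1 : ℝ) else 0]
  simp only [mul_ite, mul_one, mul_zero, Finset.sum_ite_eq', Finset.mem_univ, if_true]

lemma map_equiv_barycenter [Nonempty ι] [Nonempty κ] (e : ι ≃ κ) :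
    stdSimplex.map e (stdSimplex.barycenter : stdSimplex ℝ ι) = stdSimplex.barycenter := by
  refine map_eq_of_forall_sum_mul_eq fun g => ?_
  change ∑ x, (Fintype.card ι : ℝ)⁻¹ * g (e x) = ∑ p, (Fintype.card κ : ℝ)⁻¹ * g p
  rw [Fintype.card_congr e, Equiv.sum_comp e fun p => (Fintype.card κ : ℝ)⁻¹ * g p]

end Averages

section Product

variable {α β ι κ : Type*} [Fintype α] [DecidableEq α] [Fintype β] [DecidableEq β]
  [Fintype ι] [Fintype κ]

/-- The product weight on `α → ι`: the law of an `α`-indexed family of independent samples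
from `w`. -/
noncomputable def prodWeight (α : Type*) [Fintype α] [DecidableEq α] (w : stdSimplex ℝ ι) :
    stdSimplex ℝ (α → ι) :=
  ⟨fun h => ∏ a, w (h a), fun _ => Finset.prod_nonneg fun _ _ => stdSimplex.zero_le w _, by
    rw [← Fintype.piFinset_univ, ← Finset.prod_univ_sum fun _ : α => Finset.univ]
    simp only [stdSimplex.sum_eq_one, Finset.prod_const_one]⟩

lemma prodWeight_apply (w : stdSimplex ℝ ι) (h : α → ι) : prodWeight α w h = ∏ a, w (h a) := rfl

lemma map_comp_prodWeight (w : stdSimplex ℝ ι) (π : ι → κ) :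
    stdSimplex.map (fun h : α → ι => π ∘ h) (prodWeight α w) =
      prodWeight α (stdSimplex.map π w) := by
  classical
  ext k
  have key := Finset.prod_univ_sum (fun _ : α => (Finset.univ : Finset ι))
    fun a x => w x * if π x = k a then (1 : ℝ) else 0
  simp only [← map_apply, Fintype.piFinset_univ] at key
  rw [prodWeight_apply, key, map_apply]
  refine Finset.sum_congr rfl fun h _ => ?_
  rw [Finset.prod_mul_distrib, ← prodWeight_apply, Finset.prod_ite_zero]
  simp [funext_iff]

lemma map_precomp_prodWeight (w : stdSimplex ℝ ι) {g : β → α} (hg : Function.Injective g) :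
    stdSimplex.map (fun h : α → ι => h ∘ g) (prodWeight α w) = prodWeight β w := by
  classical
  ext k
  have key := Finset.prod_univ_sum (fun _ : α => (Finset.univ : Finset ι))
    fun a x => w x * if ∀ b, g b = a → x = k b then (1 : ℝ) else 0
  rw [Fintype.piFinset_univ] at key
  rw [map_apply, prodWeight_apply]
  trans ∑ h : α → ι, ∏ a, w (h a) * if ∀ b, g b = a → h a = k b then (1 : ℝ) else 0
  · refine Finset.sum_congr rfl fun h _ => ?_
    rw [Finset.prod_mul_distrib, ← prodWeight_apply, Finset.prod_ite_zero]
    simp only [funext_iff, Function.comp_apply, Finset.mem_univ, true_imp_iff,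
      Finset.prod_const_one, mul_ite, mul_one, mul_zero]
    congr 1
    exact propext ⟨fun hk _ b hb => hb ▸ hk b, fun hk b => hk _ b rfl⟩
  · rw [← key]
    refine (Fintype.prod_of_injective g hg _ _ (fun a ha => ?_) fun b => ?_).symm
    · have : ∀ b, g b ≠ a := fun b hb => ha ⟨b, hb⟩
      simp [this]
    · simp [hg.eq_iff]

lemma sum_prodWeight_mul_eq_update (w : stdSimplex ℝ ι) (a : α) (Φ : (α → ι) → ℝ) :
    ∑ h, prodWeight α w h * Φ h =
      ∑ h, prodWeight α w h * ∑ x, w x * Φ (Function.update h a x) := by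
  have hswap : Function.Involutive
      fun p : (α → ι) × ι => (Function.update p.1 a p.2, p.1 a) := fun p => by ext <;> simp
  have hweight (h : α → ι) (x : ι) :
      prodWeight α w (Function.update h a x) * w (h a) = prodWeight α w h * w x := by
    simp only [prodWeight_apply, ← Finset.mul_prod_erase _ _ (Finset.mem_univ a)]
    rw [Finset.prod_congr rfl fun b hb => by rw [Function.update_of_ne (Finset.ne_of_mem_erase hb)]]
    simp only [Function.update_self]
    ring
  calc
    _ = ∑ p : (α → ι) × ι, prodWeight α w p.1 * w p.2 * Φ p.1 := by
      simp only [Fintype.sum_prod_type, mul_assoc, ← Finset.mul_sum, sum_mul_const]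
    _ = ∑ p : (α → ι) × ι, prodWeight α w p.1 * w p.2 * Φ (Function.update p.1 a p.2) := by
      rw [← Equiv.sum_comp hswap.toPerm]
      exact Finset.sum_congr rfl fun p _ => by simp only [Function.Involutive.coe_toPerm, hweight]
    _ = _ := by simp only [Fintype.sum_prod_type, mul_assoc, ← Finset.mul_sum]

lemma sum_prodWeight_eq_apply [DecidableEq ι] [Nonempty ι] {a b : α} (hab : a ≠ b) :
    ∑ h, prodWeight α (stdSimplex.barycenter : stdSimplex ℝ ι) h * (if h a = h b then 1 else 0) =
      (Fintype.card ι : ℝ)⁻¹ := by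
  rw [sum_prodWeight_mul_eq_update _ a]
  simp only [Function.update_self, Function.update_of_ne hab.symm]
  simp only [mul_ite, mul_one, mul_zero, Finset.sum_ite_eq', Finset.mem_univ, if_true]
  exact sum_mul_const _ _

lemma sum_prodWeight_not_injective_le [DecidableEq ι] [Nonempty ι] :
    ∑ h, prodWeight α (stdSimplex.barycenter : stdSimplex ℝ ι) h *
      (if Function.Injective h then 0 else 1) ≤ (Fintype.card α : ℝ) ^ 2 / Fintype.card ι := by
  set u := prodWeight α (stdSimplex.barycenter : stdSimplex ℝ ι)
  have union_bound (h : α → ι) : (if Function.Injective h then (0 : ℝ) else 1) ≤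
      ∑ p ∈ Finset.univ.offDiag, if h p.1 = h p.2 then 1 else 0 := by
    have hnonneg (p : α × α) : (0 : ℝ) ≤ if h p.1 = h p.2 then 1 else 0 := by split_ifs <;> simp
    split_ifs with hinj
    · exact Finset.sum_nonneg fun p _ => hnonneg p
    · obtain ⟨a, b, hval, hne⟩ := Function.not_injective_iff.1 hinj
      simpa [hval] using Finset.single_le_sum (fun p _ => hnonneg p)
        (Finset.mem_offDiag (x := (a, b)).2 ⟨Finset.mem_univ a, Finset.mem_univ b, hne⟩)
  calc
    _ ≤ ∑ h, u h * ∑ p ∈ Finset.univ.offDiag, if h p.1 = h p.2 then 1 else 0 :=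
      sum_mul_mono union_bound
    _ = ∑ p ∈ (Finset.univ : Finset α).offDiag, ∑ h, u h * if h p.1 = h p.2 then 1 else 0 := by
      simp only [Finset.mul_sum]
      exact Finset.sum_comm
    _ = (Finset.univ : Finset α).offDiag.card * (Fintype.card ι : ℝ)⁻¹ := by
      rw [Finset.sum_congr rfl fun p hp =>
        sum_prodWeight_eq_apply (Finset.mem_offDiag.1 hp).2.2, Finset.sum_const, nsmul_eq_mul]
    _ ≤ (Fintype.card α : ℝ) ^ 2 / Fintype.card ι := by
      rw [div_eq_mul_inv, Finset.offDiag_card, Finset.card_univ, sq]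
      gcongr
      exact_mod_cast Nat.sub_le _ _

-- An injective `v` samples exactly from `w`; the other `v` carry weight at most `|α|² / |κ|`.
lemma sum_prodWeight_sample_le [DecidableEq κ] [Nonempty κ] (w : stdSimplex ℝ ι)
    {Φ : (α → ι) → ℝ} (hΦ : ∀ h, |Φ h| ≤ 1) :
    ∑ f, prodWeight κ w f *
        ∑ v, prodWeight α (stdSimplex.barycenter : stdSimplex ℝ κ) v * Φ (f ∘ v) ≤
      ∑ h, prodWeight α w h * Φ h + 2 * ((Fintype.card α : ℝ) ^ 2 / Fintype.card κ) := by
  classical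
  set u := prodWeight α (stdSimplex.barycenter : stdSimplex ℝ κ)
  set m := ∑ h, prodWeight α w h * Φ h
  have hm : -1 ≤ m := le_sum_mul fun h => (abs_le.1 (hΦ h)).1
  have sample_le (v : α → κ) : ∑ f, prodWeight κ w f * Φ (f ∘ v) ≤
      m + 2 * if Function.Injective v then 0 else 1 := by
    split_ifs with hv
    · rw [← sum_map_mul _ fun f : κ → ι => f ∘ v, map_precomp_prodWeight w hv, mul_zero, add_zero]
    · linarith [sum_mul_le (w := prodWeight κ w) fun f => (abs_le.1 (hΦ (f ∘ v))).2]
  calc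
    _ = ∑ v, u v * ∑ f, prodWeight κ w f * Φ (f ∘ v) := by
      simp only [Finset.mul_sum]
      rw [Finset.sum_comm]
      exact Finset.sum_congr rfl fun v _ => Finset.sum_congr rfl fun f _ => by ring
    _ ≤ ∑ v, u v * (m + 2 * if Function.Injective v then 0 else 1) := sum_mul_mono sample_le
    _ = m + 2 * ∑ v, u v * if Function.Injective v then 0 else 1 := by
      simp only [mul_add, Finset.sum_add_distrib, sum_mul_const, mul_left_comm _ (2 : ℝ),
        ← Finset.mul_sum]
    _ ≤ _ := by gcongr; exact sum_prodWeight_not_injective_le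

end Product

section CutForm

variable {ι κ : Type*} [Fintype ι] [Fintype κ] {w : stdSimplex ℝ ι} {u v : ι → ι → ℝ} {c d : ℝ}

/-- The bilinear form `(s, t) ↦ 𝔼 u(x, y) s(x) t(y)` of the kernel `u`, with `x` and `y` sampled
independently from `w`. -/
noncomputable def cutForm (w : stdSimplex ℝ ι) (u : ι → ι → ℝ) (s t : ι → ℝ) : ℝ :=
  ∑ x, w x * ∑ y, w y * (u x y * (s x * t y))

/-- The kernel `u` has cut norm at most `c` with respect to `w`. The cut norm is tested on
functions with values in `[0, 1]` instead of on sets; see `CutBounded.of_forall_finset`. -/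
def CutBounded (w : stdSimplex ℝ ι) (u : ι → ι → ℝ) (c : ℝ) : Prop :=
  ∀ s t : ι → ℝ, (∀ x, s x ∈ Icc (0 : ℝ) 1) → (∀ y, t y ∈ Icc (0 : ℝ) 1) → |cutForm w u s t| ≤ c

lemma cutForm_eq_sum_mul (w : stdSimplex ℝ ι) (u : ι → ι → ℝ) (s t : ι → ℝ) :
    cutForm w u s t = ∑ x, w x * (s x * ∑ y, w y * (t y * u x y)) := by
  simp only [cutForm, Finset.mul_sum]
  exact Finset.sum_congr rfl fun x _ => Finset.sum_congr rfl fun y _ => by ring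

lemma cutForm_map (w : stdSimplex ℝ ι) (π : ι → κ) (u : κ → κ → ℝ) (s t : κ → ℝ) :
    cutForm (stdSimplex.map π w) u s t =
      cutForm w (fun x y => u (π x) (π y)) (fun x => s (π x)) fun y => t (π y) := by
  simp only [cutForm, sum_map_mul]

lemma CutBounded.mono (h : CutBounded w u c) (hcd : c ≤ d) : CutBounded w u d :=
  fun s t hs ht => (h s t hs ht).trans hcd

lemma CutBounded.add (hu : CutBounded w u c) (hv : CutBounded w v d) :
    CutBounded w (fun x y => u x y + v x y) (c + d) := fun s t hs ht => by
  have hsum : cutForm w (fun x y => u x y + v x y) s t = cutForm w u s t + cutForm w v s t := by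
    simp only [cutForm, add_mul, mul_add, Finset.sum_add_distrib]
  rw [hsum]
  exact (abs_add_le _ _).trans (add_le_add (hu s t hs ht) (hv s t hs ht))

lemma CutBounded.neg (hu : CutBounded w u c) : CutBounded w (fun x y => -u x y) c :=
  fun s t hs ht => by
    have hneg : cutForm w (fun x y => -u x y) s t = -cutForm w u s t := by
      simp only [cutForm, neg_mul, mul_neg, Finset.sum_neg_distrib]
    rw [hneg, abs_neg]
    exact hu s t hs ht

lemma CutBounded.sub (hu : CutBounded w u c) (hv : CutBounded w v d) :
    CutBounded w (fun x y => u x y - v x y) (c + d) := by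
  simpa only [sub_eq_add_neg] using hu.add hv.neg

lemma CutBounded.of_abs_le (h : ∀ x y, |u x y| ≤ c) : CutBounded w u c := fun s t hs ht =>
  abs_sum_mul_le fun x => abs_sum_mul_le fun y => by
    rw [abs_mul, abs_of_nonneg (mul_nonneg (hs x).1 (ht y).1)]
    exact (mul_le_of_le_one_right (abs_nonneg _)
      (mul_le_one₀ (hs x).2 (ht y).1 (ht y).2)).trans (h x y)

lemma CutBounded.comp_equiv {e : κ ≃ ι} {w' : stdSimplex ℝ κ} (he : stdSimplex.map e w' = w)
    (hu : CutBounded w u c) : CutBounded w' (fun x y => u (e x) (e y)) c := fun s t hs ht => by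
  have := hu (fun x => s (e.symm x)) (fun y => t (e.symm y)) (fun x => hs _) fun y => ht _
  rw [← he, cutForm_map] at this
  simpa only [e.symm_apply_apply] using this

-- A linear functional on the cube `[0, 1]^ι` is extremal at the positive and negative supports.
lemma abs_sum_mul_le_of_forall_finset {a : ι → ℝ}
    (h : ∀ A : Finset ι, |∑ x ∈ A, a x| ≤ c) {s : ι → ℝ} (hs : ∀ x, s x ∈ Icc (0 : ℝ) 1) :
    |∑ x, s x * a x| ≤ c := by
  have hpos : ∑ x, s x * a x ≤ ∑ x with 0 ≤ a x, a x := by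
    rw [Finset.sum_filter]
    refine Finset.sum_le_sum fun x _ => ?_
    obtain ⟨hs0, hs1⟩ := hs x
    split_ifs with hx <;> nlinarith
  have hneg : ∑ x with a x ≤ 0, a x ≤ ∑ x, s x * a x := by
    rw [Finset.sum_filter]
    refine Finset.sum_le_sum fun x _ => ?_
    obtain ⟨hs0, hs1⟩ := hs x
    split_ifs with hx <;> nlinarith
  exact abs_le.2 ⟨(abs_le.1 (h _)).1.trans hneg, hpos.trans (abs_le.1 (h _)).2⟩

lemma CutBounded.of_forall_finset
    (h : ∀ A B : Finset ι, |∑ x ∈ A, ∑ y ∈ B, w x * (w y * u x y)| ≤ c) : CutBounded w u c := by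
  intro s t hs ht
  have hst : cutForm w u s t = ∑ x, s x * ∑ y, t y * (w x * (w y * u x y)) := by
    simp only [cutForm, Finset.mul_sum]
    exact Finset.sum_congr rfl fun x _ => Finset.sum_congr rfl fun y _ => by ring
  rw [hst]
  refine abs_sum_mul_le_of_forall_finset (fun A => ?_) hs
  rw [Finset.sum_comm]
  simp only [← Finset.mul_sum]
  refine abs_sum_mul_le_of_forall_finset (fun B => ?_) ht
  rw [Finset.sum_comm]
  exact h A B

end CutForm

section FourCycle

variable {ι κ : Type*}

/-- The integrand of `fourCycleDensity`: the product of `R` over the edges of the four-cycle with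
classes `{v₀, v₂}` and `{v₁, v₃}`. -/
def fourCycleProd (R : ι → ι → ℝ) (v : Fin 4 → ι) : ℝ :=
  R (v 0) (v 1) * R (v 2) (v 1) * R (v 2) (v 3) * R (v 0) (v 3)

lemma abs_fourCycleProd_le_one {R : ι → ι → ℝ} (hR : ∀ x y, |R x y| ≤ 1) (v : Fin 4 → ι) :
    |fourCycleProd R v| ≤ 1 := by
  have hprod {a b : ℝ} (ha : |a| ≤ 1) (hb : |b| ≤ 1) : |a * b| ≤ 1 := by
    rw [abs_mul]
    exact mul_le_one₀ ha (abs_nonneg b) hb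
  exact hprod (hprod (hprod (hR _ _) (hR _ _)) (hR _ _)) (hR _ _)

variable [Fintype ι] [Fintype κ] {w : stdSimplex ℝ ι}

/-- The homomorphism density `t(C₄, R)` of the four-cycle in the (not necessarily symmetric)
kernel `R`. Its fourth root is a norm dominating the cut norm which, unlike the cut norm, is an
average over finite samples. -/
noncomputable def fourCycleDensity (w : stdSimplex ℝ ι) (R : ι → ι → ℝ) : ℝ :=
  ∑ v, prodWeight (Fin 4) w v * fourCycleProd R v

lemma fourCycleDensity_map (w : stdSimplex ℝ ι) (π : ι → κ) (R : κ → κ → ℝ) :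
    fourCycleDensity (stdSimplex.map π w) R = fourCycleDensity w fun x y => R (π x) (π y) := by
  rw [fourCycleDensity, ← map_comp_prodWeight, sum_map_mul]
  rfl

lemma sum_prodWeight_succ {n : ℕ} (w : stdSimplex ℝ ι) (Φ : (Fin (n + 1) → ι) → ℝ) :
    ∑ v, prodWeight (Fin (n + 1)) w v * Φ v =
      ∑ x, w x * ∑ v, prodWeight (Fin n) w v * Φ (Fin.cons x v) := by
  rw [← (Fin.consEquiv fun _ => ι).sum_comp, Fintype.sum_prod_type]
  simp only [Fin.consEquiv, Equiv.coe_fn_mk, prodWeight_apply, Fin.prod_univ_succ, Fin.cons_zero,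
    Fin.cons_succ, Finset.mul_sum, mul_assoc]

lemma fourCycleDensity_eq_sum (w : stdSimplex ℝ ι) (R : ι → ι → ℝ) :
    fourCycleDensity w R =
      ∑ x, w x * ∑ y, w y * ∑ x', w x' * ∑ y', w y' * (R x y * R x' y * R x' y' * R x y') := by
  simp only [fourCycleDensity, sum_prodWeight_succ]
  simp [fourCycleProd, Fin.cons]
  rfl

lemma fourCycleDensity_eq_sum_mul_cutForm (w : stdSimplex ℝ ι) (R : ι → ι → ℝ) :
    fourCycleDensity w R =
      ∑ x, w x * ∑ y, w y * (R x y * cutForm w R (fun x' => R x' y) (R x)) := by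
  rw [fourCycleDensity_eq_sum]
  simp only [cutForm, Finset.mul_sum]
  refine Finset.sum_congr rfl fun x _ => Finset.sum_congr rfl fun y _ =>
    Finset.sum_congr rfl fun x' _ => Finset.sum_congr rfl fun y' _ => by ring

lemma fourCycleDensity_eq_sum_sq (w : stdSimplex ℝ ι) (R : ι → ι → ℝ) :
    fourCycleDensity w R = ∑ y, w y * ∑ y', w y' * (∑ x, w x * (R x y * R x y')) ^ 2 := by
  rw [fourCycleDensity_eq_sum]
  simp only [sq_sum_mul, Finset.mul_sum]
  rw [Finset.sum_comm]
  refine Finset.sum_congr rfl fun y _ => ?_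
  rw [Finset.sum_congr rfl fun x _ => Finset.sum_comm, Finset.sum_comm]
  exact Finset.sum_congr rfl fun y' _ => Finset.sum_congr rfl fun x _ =>
    Finset.sum_congr rfl fun x' _ => by ring

lemma fourCycleDensity_nonneg (w : stdSimplex ℝ ι) (R : ι → ι → ℝ) : 0 ≤ fourCycleDensity w R := by
  rw [fourCycleDensity_eq_sum_sq]
  exact le_sum_mul fun y => le_sum_mul fun y' => sq_nonneg _

lemma sq_sum_mul_le {s : ι → ℝ} (hs : ∀ x, |s x| ≤ 1) (g : ι → ℝ) :
    (∑ x, w x * (s x * g x)) ^ 2 ≤ ∑ x, w x * g x ^ 2 :=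
  (sum_mul_pow_le_of_even w even_two _).trans <| sum_mul_mono fun x => by
    rw [mul_pow]
    exact mul_le_of_le_one_left (sq_nonneg _) ((sq_le_one_iff_abs_le_one _).2 (hs x))

-- Cauchy–Schwarz removes `s`, then the two copies of `t` left after expanding the square.
lemma cutForm_pow_four_le {s t : ι → ℝ} (hs : ∀ x, |s x| ≤ 1) (ht : ∀ y, |t y| ≤ 1)
    (R : ι → ι → ℝ) : cutForm w R s t ^ 4 ≤ fourCycleDensity w R := by
  have expand : ∑ x, w x * (∑ y, w y * (t y * R x y)) ^ 2 =
      ∑ y, w y * (t y * ∑ y', w y' * (t y' * ∑ x, w x * (R x y * R x y'))) := by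
    simp only [sq_sum_mul, Finset.mul_sum]
    rw [Finset.sum_comm]
    refine Finset.sum_congr rfl fun y _ => ?_
    rw [Finset.sum_comm]
    exact Finset.sum_congr rfl fun y' _ => Finset.sum_congr rfl fun x _ => by ring
  calc
    cutForm w R s t ^ 4 = (cutForm w R s t ^ 2) ^ 2 := by ring
    _ ≤ (∑ x, w x * (∑ y, w y * (t y * R x y)) ^ 2) ^ 2 := by
      gcongr
      rw [cutForm_eq_sum_mul]
      exact sq_sum_mul_le hs _
    _ ≤ ∑ y, w y * (∑ y', w y' * (t y' * ∑ x, w x * (R x y * R x y'))) ^ 2 := by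
      rw [expand]
      exact sq_sum_mul_le ht _
    _ ≤ fourCycleDensity w R := by
      rw [fourCycleDensity_eq_sum_sq]
      exact sum_mul_mono fun y => sq_sum_mul_le ht _

lemma CutBounded.of_fourCycleDensity_le {R : ι → ι → ℝ} {c : ℝ} (hc : 0 ≤ c)
    (h : fourCycleDensity w R ≤ c ^ 4) : CutBounded w R c := fun _ _ hs ht =>
  have abs_le_one {a : ℝ} (ha : a ∈ Icc (0 : ℝ) 1) : |a| ≤ 1 := (abs_of_nonneg ha.1).trans_le ha.2
  le_of_pow_le_pow_left₀ four_ne_zero hc <| (Even.pow_abs ⟨2, rfl⟩ _).trans_le <|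
    (cutForm_pow_four_le (fun x => abs_le_one (hs x)) (fun y => abs_le_one (ht y)) _).trans h

end FourCycle

section Regularity

variable {ι κ κ' : Type*}

/-- What remains of the kernel `A` after subtracting the step kernel which takes the value `D p q`
between the parts labelled `p` and `q` of the partition `P`. -/
def residual (A : ι → ι → ℝ) (P : ι → κ) (D : κ → κ → ℝ) : ι → ι → ℝ :=
  fun x y => A x y - D (P x) (P y)

lemma residual_comp_equiv (A : ι → ι → ℝ) (P : ι → κ) (D : κ → κ → ℝ) (e : κ ≃ κ') :
    residual A (e ∘ P) (fun p q => D (e.symm p) (e.symm q)) = residual A P D := by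
  unfold residual
  simp only [Function.comp_apply, e.symm_apply_apply]

lemma abs_residual_le_one {A : ι → ι → ℝ} {P : ι → κ} {D : κ → κ → ℝ}
    (hA : ∀ x y, A x y = 0 ∨ A x y = 1) (hD : ∀ p q, D p q ∈ Icc (0 : ℝ) 1) (x y : ι) :
    |residual A P D x y| ≤ 1 := by
  obtain ⟨hD0, hD1⟩ := hD (P x) (P y)
  rcases hA x y with h | h <;> rw [residual, h, abs_le] <;> constructor <;> linarith

variable [Fintype ι] {w : stdSimplex ℝ ι}

/-- The mean square `𝔼 R(x, y)²`, the quantity decremented by the energy argument. -/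
noncomputable def energy (w : stdSimplex ℝ ι) (R : ι → ι → ℝ) : ℝ :=
  ∑ x, w x * ∑ y, w y * R x y ^ 2

lemma energy_nonneg (w : stdSimplex ℝ ι) (R : ι → ι → ℝ) : 0 ≤ energy w R :=
  le_sum_mul fun _ => le_sum_mul fun _ => sq_nonneg _

lemma energy_mono {R R' : ι → ι → ℝ} (h : ∀ x y, |R x y| ≤ |R' x y|) : energy w R ≤ energy w R' :=
  sum_mul_mono fun x => sum_mul_mono fun y => sq_le_sq.2 (h x y)

lemma energy_le_one {R : ι → ι → ℝ} (h : ∀ x y, |R x y| ≤ 1) : energy w R ≤ 1 :=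
  sum_mul_le fun x => sum_mul_le fun y => (sq_le_one_iff_abs_le_one _).2 (h x y)

lemma energy_sub_cutForm_mul_le {f g : ι → ℝ} (hf : ∀ x, |f x| ≤ 1) (hg : ∀ y, |g y| ≤ 1)
    (R : ι → ι → ℝ) :
    energy w (fun x y => R x y - cutForm w R f g * (f x * g y)) ≤
      energy w R - cutForm w R f g ^ 2 := by
  set v := cutForm w R f g with hv
  have pointwise (x y : ι) : (R x y - v * (f x * g y)) ^ 2 ≤
      R x y ^ 2 - 2 * v * (R x y * (f x * g y)) + v ^ 2 := by
    have hfg : (f x * g y) ^ 2 ≤ 1 := by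
      rw [sq_le_one_iff_abs_le_one, abs_mul]
      exact mul_le_one₀ (hf x) (abs_nonneg _) (hg y)
    nlinarith [mul_le_of_le_one_right (sq_nonneg v) hfg]
  calc
    _ ≤ ∑ x, w x * ∑ y, w y * (R x y ^ 2 - 2 * v * (R x y * (f x * g y)) + v ^ 2) :=
      sum_mul_mono fun x => sum_mul_mono fun y => pointwise x y
    _ = energy w R - 2 * v * cutForm w R f g + v ^ 2 := by
      simp only [mul_add, mul_sub, Finset.sum_add_distrib, Finset.sum_sub_distrib, sum_mul_const,
        mul_left_comm _ (2 * v), ← Finset.mul_sum, energy, cutForm]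
    _ = _ := by rw [← hv]; ring

lemma exists_lt_abs_cutForm {R : ι → ι → ℝ} (hR : ∀ x y, |R x y| ≤ 1) {ε : ℝ}
    (h : ε < fourCycleDensity w R) :
    ∃ x y, ε < |cutForm w R (fun x' => R x' y) (R x)| := by
  contrapose! h
  rw [fourCycleDensity_eq_sum_mul_cutForm]
  refine sum_mul_le fun x => sum_mul_le fun y => (le_abs_self _).trans ?_
  rw [abs_mul]
  exact (mul_le_of_le_one_left (abs_nonneg _) (hR x y)).trans (h x y)

-- The row and column of the residual realising a large `cutForm` are functions of the old label
-- and of one bit of `A`, so subtracting their product only needs a fourfold refinement.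
lemma exists_refinement_energy_le {A : ι → ι → ℝ} (hA : ∀ x y, A x y = 0 ∨ A x y = 1)
    {P : ι → κ} {D : κ → κ → ℝ} (hD : ∀ p q, D p q ∈ Icc (0 : ℝ) 1) {ε : ℝ} (hε : 0 ≤ ε)
    (h : ε < fourCycleDensity w (residual A P D)) :
    ∃ (P' : ι → κ × Bool × Bool) (D' : κ × Bool × Bool → κ × Bool × Bool → ℝ),
      (∀ p q, D' p q ∈ Icc (0 : ℝ) 1) ∧
      energy w (residual A P' D') ≤ energy w (residual A P D) - ε ^ 2 := by
  classical
  set R := residual A P D with hR_def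
  have hR : ∀ x y, |R x y| ≤ 1 := abs_residual_le_one hA hD
  obtain ⟨x₀, y₀, hv⟩ := exists_lt_abs_cutForm hR h
  set v := cutForm w R (fun x => R x y₀) (R x₀)
  let bit (a : ℝ) : Bool := decide (a = 1)
  let val (b : Bool) : ℝ := if b then 1 else 0
  have val_bit (x y : ι) : val (bit (A x y)) = A x y := by
    rcases hA x y with h | h <;> simp [val, bit, h]
  let P' (x : ι) : κ × Bool × Bool := (P x, bit (A x y₀), bit (A x₀ x))
  let f (p : κ × Bool × Bool) : ℝ := val p.2.1 - D p.1 (P y₀)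
  let g (q : κ × Bool × Bool) : ℝ := val q.2.2 - D (P x₀) q.1
  have hf (x : ι) : f (P' x) = R x y₀ := by simp only [f, P', val_bit, hR_def, residual]
  have hg (y : ι) : g (P' y) = R x₀ y := by simp only [g, P', val_bit, hR_def, residual]
  let D' (p q : κ × Bool × Bool) : ℝ := projIcc 0 1 zero_le_one (D p.1 q.1 + v * (f p * g q))
  refine ⟨P', D', fun p q => Subtype.property _, ?_⟩
  have clamp (x y : ι) : |residual A P' D' x y| ≤ |R x y - v * (R x y₀ * R x₀ y)| := by
    have hAxy : A x y ∈ Icc (0 : ℝ) 1 := by rcases hA x y with h | h <;> simp [h]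
    have := abs_projIcc_sub_projIcc (c := A x y) (d := D (P x) (P y) + v * (f (P' x) * g (P' y)))
      (zero_le_one (α := ℝ))
    rw [projIcc_of_mem _ hAxy, hf, hg] at this
    simpa only [residual, D', hf, hg, hR_def, sub_sub] using this
  calc
    energy w (residual A P' D') ≤ energy w fun x y => R x y - v * (R x y₀ * R x₀ y) :=
      energy_mono clamp
    _ ≤ energy w R - v ^ 2 := energy_sub_cutForm_mul_le (fun x => hR x y₀) (hR x₀) R
    _ ≤ energy w R - ε ^ 2 := by
      have := pow_le_pow_left₀ hε hv.le 2
      rw [sq_abs] at this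
      linarith

lemma exists_partition_fourCycleDensity_le_or_energy_le {A : ι → ι → ℝ}
    (hA : ∀ x y, A x y = 0 ∨ A x y = 1) (w : stdSimplex ℝ ι) {ε : ℝ} (hε : 0 ≤ ε) (r : ℕ) :
    ∃ (P : ι → Fin (4 ^ r)) (D : Fin (4 ^ r) → Fin (4 ^ r) → ℝ),
      (∀ p q, D p q ∈ Icc (0 : ℝ) 1) ∧
      (fourCycleDensity w (residual A P D) ≤ ε ∨ energy w (residual A P D) ≤ 1 - r * ε ^ 2) := by
  induction r with
  | zero =>
    have hD : ∀ _ _ : Fin (4 ^ 0), (0 : ℝ) ∈ Icc (0 : ℝ) 1 := fun _ _ => by simp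
    refine ⟨fun _ => 0, fun _ _ => 0, hD, Or.inr ?_⟩
    simpa using energy_le_one (abs_residual_le_one hA hD)
  | succ r ih =>
    obtain ⟨P, D, hD, hPD⟩ := ih
    have e : Fin (4 ^ r) × Bool × Bool ≃ Fin (4 ^ (r + 1)) :=
      Fintype.equivFinOfCardEq (by simp [pow_succ])
    by_cases hreg : fourCycleDensity w (residual A P D) ≤ ε
    · refine ⟨e ∘ fun x => (P x, false, false), fun p q => D (e.symm p).1 (e.symm q).1,
        fun p q => hD _ _, Or.inl ?_⟩
      rwa [residual_comp_equiv A (fun x => (P x, false, false)) (fun p q => D p.1 q.1)]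
    · obtain ⟨P', D', hD', hdec⟩ := exists_refinement_energy_le hA hD hε (not_le.1 hreg)
      refine ⟨e ∘ P', fun p q => D' (e.symm p) (e.symm q), fun p q => hD' _ _, Or.inr ?_⟩
      rw [residual_comp_equiv]
      push_cast
      linarith [hPD.resolve_left hreg]

/-- The weak regularity lemma, with the four-cycle density in place of the cut norm. -/
theorem exists_partition_fourCycleDensity_le {ε : ℝ} (hε : 0 < ε) :
    ∃ M : ℕ, ∀ {ι : Type*} [Fintype ι] (w : stdSimplex ℝ ι) {A : ι → ι → ℝ},
      (∀ x y, A x y = 0 ∨ A x y = 1) →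
      ∃ (P : ι → Fin M) (D : Fin M → Fin M → ℝ), (∀ p q, D p q ∈ Icc (0 : ℝ) 1) ∧
        fourCycleDensity w (residual A P D) ≤ ε := by
  obtain ⟨r, hr⟩ := exists_nat_gt (1 / ε ^ 2)
  rw [div_lt_iff₀ (by positivity)] at hr
  refine ⟨4 ^ r, fun w A hA => ?_⟩
  obtain ⟨P, D, hD, hreg | henergy⟩ :=
    exists_partition_fourCycleDensity_le_or_energy_le hA w hε.le r
  · exact ⟨P, D, hD, hreg⟩
  · linarith [energy_nonneg w (residual A P D)]

end Regularity

section Sampling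

variable {ι ι' κ : Type*} [Fintype ι] [Fintype ι'] [Fintype κ] {w : stdSimplex ℝ ι}
  {w' : stdSimplex ℝ ι'} {A : ι → ι → ℝ} {B : ι' → ι' → ℝ} {c : ℝ} {M : ℕ}

/-- The weighted kernels `(w, A)` and `(w', B)` are both approximated, up to four-cycle density
`c ^ 4`, by one and the same step kernel `D` on `M` parts, for partitions whose part sizes differ
by at most `c` in total. This certifies closeness in cut distance. -/
def HaveCommonRegularization (c : ℝ) (M : ℕ) (w : stdSimplex ℝ ι) (A : ι → ι → ℝ)
    (w' : stdSimplex ℝ ι') (B : ι' → ι' → ℝ) : Prop :=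
  ∃ (P : ι → Fin M) (Q : ι' → Fin M) (D : Fin M → Fin M → ℝ),
    (∀ p q, D p q ∈ Icc (0 : ℝ) 1) ∧
    fourCycleDensity w (residual A P D) ≤ c ^ 4 ∧
    fourCycleDensity w' (residual B Q D) ≤ c ^ 4 ∧
    ∑ p, |stdSimplex.map P w p - stdSimplex.map Q w' p| ≤ c

lemma sq_sum_mul_eq_sum_prodWeight (w : stdSimplex ℝ ι) (f : ι → ℝ) :
    (∑ x, w x * f x) ^ 2 = ∑ v, prodWeight (Fin 2) w v * (f (v 0) * f (v 1)) := by
  simp only [Fintype.sum_pow, Fin.prod_univ_two, prodWeight_apply, mul_mul_mul_comm]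

variable [Nonempty κ]

lemma sum_prodWeight_sq_sum_le [DecidableEq κ] {g : ι → ℝ} (hg : ∀ x, |g x| ≤ 1) :
    ∑ f, prodWeight κ w f *
        (∑ i, (stdSimplex.barycenter : stdSimplex ℝ κ) i * g (f i)) ^ 2 ≤
      (∑ x, w x * g x) ^ 2 + 8 / Fintype.card κ := by
  have hΦ (v : Fin 2 → ι) : |g (v 0) * g (v 1)| ≤ 1 := by
    rw [abs_mul]
    exact mul_le_one₀ (hg _) (abs_nonneg _) (hg _)
  simp only [sq_sum_mul_eq_sum_prodWeight]
  refine (sum_prodWeight_sample_le w hΦ).trans_eq ?_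
  rw [Fintype.card_fin]
  ring

lemma sum_prodWeight_sq_sum_abs_map_sub_le [DecidableEq κ] (P : ι → Fin M) :
    ∑ f, prodWeight κ w f * (∑ p, |stdSimplex.map P w p -
        stdSimplex.map (P ∘ f) (stdSimplex.barycenter : stdSimplex ℝ κ) p|) ^ 2 ≤
      8 * M ^ 2 / Fintype.card κ := by
  let g (p : Fin M) (x : ι) : ℝ := stdSimplex.map P w p - if P x = p then 1 else 0
  have hg (p : Fin M) (x : ι) : |g p x| ≤ 1 := by
    have h0 := stdSimplex.zero_le (stdSimplex.map P w) p
    have h1 := stdSimplex.le_one (stdSimplex.map P w) p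
    rw [abs_le]
    dsimp only [g]
    split_ifs <;> constructor <;> linarith
  have mean_zero (p : Fin M) : ∑ x, w x * g p x = 0 := by
    simp only [g, mul_sub, Finset.sum_sub_distrib, ← map_apply, sum_mul_const, sub_self]
  have deviation (p : Fin M) (f : κ → ι) :
      stdSimplex.map P w p - stdSimplex.map (P ∘ f) stdSimplex.barycenter p =
        ∑ i, (stdSimplex.barycenter : stdSimplex ℝ κ) i * g p (f i) := by
    simp only [g, mul_sub, Finset.sum_sub_distrib, sum_mul_const, map_apply _ (P ∘ f),
      Function.comp_apply]
  calc
    _ ≤ ∑ f, prodWeight κ w f *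
        (M * ∑ p, (∑ i, (stdSimplex.barycenter : stdSimplex ℝ κ) i * g p (f i)) ^ 2) :=
      sum_mul_mono fun f => by
        simpa only [deviation, sq_abs, Finset.card_univ, Fintype.card_fin] using
          sq_sum_le_card_mul_sum_sq (s := Finset.univ)
            (f := fun p => |∑ i, (stdSimplex.barycenter : stdSimplex ℝ κ) i * g p (f i)|)
    _ = M * ∑ p, ∑ f, prodWeight κ w f *
        (∑ i, (stdSimplex.barycenter : stdSimplex ℝ κ) i * g p (f i)) ^ 2 := by
      simp only [mul_left_comm _ (M : ℝ), ← Finset.mul_sum]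
      simp only [Finset.mul_sum]
      rw [Finset.sum_comm]
    _ ≤ M * ∑ _p : Fin M, (8 / Fintype.card κ : ℝ) := by
      gcongr with p
      exact (sum_prodWeight_sq_sum_le (hg p)).trans_eq (by rw [mean_zero]; ring)
    _ = 8 * M ^ 2 / Fintype.card κ := by
      rw [Finset.sum_const, Finset.card_univ, Fintype.card_fin, nsmul_eq_mul]
      ring

open scoped Classical in
lemma one_sub_sum_mul_le {Z : ι → ℝ} (hZ : ∀ x, 0 ≤ Z x) :
    1 - ∑ x, w x * Z x ≤ ∑ x, w x * if Z x ≤ 1 then 1 else 0 := by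
  calc
    _ = ∑ x, w x * (1 - Z x) := by simp only [mul_sub, Finset.sum_sub_distrib, sum_mul_const]
    _ ≤ _ := sum_mul_mono fun x => by split_ifs <;> linarith [hZ x]

open scoped Classical in
lemma le_sum_prodWeight_haveCommonRegularization [DecidableEq κ]
    (hA : ∀ x y, A x y = 0 ∨ A x y = 1) (hc : 0 < c)
    {P : ι → Fin M} {D : Fin M → Fin M → ℝ} (hD : ∀ p q, D p q ∈ Icc (0 : ℝ) 1)
    (hP : fourCycleDensity w (residual A P D) ≤ c ^ 4 / 8) :
    7 / 8 - (32 / c ^ 4 + 8 * M ^ 2 / c ^ 2) / Fintype.card κ ≤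
      ∑ f, prodWeight κ w f * if HaveCommonRegularization c M w A
        (stdSimplex.barycenter : stdSimplex ℝ κ) (fun i j => A (f i) (f j)) then 1 else 0 := by
  set R := residual A P D
  let u : stdSimplex ℝ κ := stdSimplex.barycenter
  let four (f : κ → ι) : ℝ := fourCycleDensity u fun i j => R (f i) (f j)
  let dev (f : κ → ι) : ℝ := ∑ p, |stdSimplex.map P w p - stdSimplex.map (P ∘ f) u p|
  let Z (f : κ → ι) : ℝ := four f / c ^ 4 + dev f ^ 2 / c ^ 2
  have mean_four : ∑ f, prodWeight κ w f * four f ≤ c ^ 4 / 8 + 32 / Fintype.card κ := by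
    have := sum_prodWeight_sample_le (κ := κ) w
      (abs_fourCycleProd_le_one (abs_residual_le_one (P := P) hA hD))
    rw [Fintype.card_fin] at this
    exact this.trans (add_le_add hP (le_of_eq (by ring)))
  have mean_dev : ∑ f, prodWeight κ w f * dev f ^ 2 ≤ 8 * M ^ 2 / Fintype.card κ :=
    sum_prodWeight_sq_sum_abs_map_sub_le P
  have mean_Z : ∑ f, prodWeight κ w f * Z f ≤
      1 / 8 + (32 / c ^ 4 + 8 * M ^ 2 / c ^ 2) / Fintype.card κ := by
    simp only [Z, mul_add, Finset.sum_add_distrib, mul_div_assoc', ← Finset.sum_div]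
    calc
      _ ≤ (c ^ 4 / 8 + 32 / Fintype.card κ) / c ^ 4 + (8 * M ^ 2 / Fintype.card κ) / c ^ 2 := by
        gcongr
      _ = _ := by field_simp; ring
  have hfour (f : κ → ι) : 0 ≤ four f / c ^ 4 :=
    div_nonneg (fourCycleDensity_nonneg _ _) (by positivity)
  have hdev (f : κ → ι) : 0 ≤ dev f ^ 2 / c ^ 2 := by positivity
  have good (f : κ → ι) (hf : Z f ≤ 1) :
      HaveCommonRegularization c M w A u fun i j => A (f i) (f j) := by
    refine ⟨P, P ∘ f, D, hD, hP.trans (by linarith [pow_pos hc 4]), ?_, ?_⟩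
    · exact (div_le_one (by positivity)).1 ((le_add_of_nonneg_right (hdev f)).trans hf)
    · refine le_of_sq_le_sq ?_ hc.le
      exact (div_le_one (by positivity)).1 ((le_add_of_nonneg_left (hfour f)).trans hf)
  calc
    _ ≤ 1 - ∑ f, prodWeight κ w f * Z f := by linarith
    _ ≤ _ := one_sub_sum_mul_le fun f => add_nonneg (hfour f) (hdev f)
    _ ≤ _ := sum_mul_mono fun f => by
      split_ifs with hZ hgood hgood
      exacts [le_rfl, absurd (good f hZ) hgood, zero_le_one, le_rfl]

open scoped Classical in
theorem exists_le_sum_prodWeight_haveCommonRegularization (hc : 0 < c) :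
    ∃ M k : ℕ, ∀ {ι : Type*} [Fintype ι] (w : stdSimplex ℝ ι) {A : ι → ι → ℝ},
      (∀ x y, A x y = 0 ∨ A x y = 1) →
      3 / 4 ≤ ∑ f, prodWeight (Fin (k + 1)) w f * if HaveCommonRegularization c M w A
        (stdSimplex.barycenter : stdSimplex ℝ (Fin (k + 1))) (fun i j => A (f i) (f j))
          then 1 else 0 := by
  obtain ⟨M, hM⟩ := exists_partition_fourCycleDensity_le (show 0 < c ^ 4 / 8 by positivity)
  obtain ⟨k, hk⟩ := exists_nat_gt (8 * (32 / c ^ 4 + 8 * M ^ 2 / c ^ 2))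
  refine ⟨M, k, fun w A hA => ?_⟩
  obtain ⟨P, D, hD, hP⟩ := hM w hA
  refine le_trans ?_ (le_sum_prodWeight_haveCommonRegularization hA hc hD hP)
  have hsmall : (32 / c ^ 4 + 8 * (M : ℝ) ^ 2 / c ^ 2) / Fintype.card (Fin (k + 1)) ≤ 1 / 8 := by
    rw [Fintype.card_fin, div_le_iff₀ (by positivity)]
    push_cast
    linarith
  linarith

end Sampling

section Matching

variable {Ω ι ι' ι'' κ : Type*}

-- A permutation with the most agreements works: if some `y` were sent into the fibre of `a` while
-- `p y ≠ a`, and some `x` with `p x = a` were not, then swapping `x` and `y` would gain.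
lemma exists_perm_fiber_subset [Finite Ω] (p q : Ω → κ) :
    ∃ σ : Equiv.Perm Ω, ∀ a, (∀ x, q (σ x) = a → p x = a) ∨ ∀ x, p x = a → q (σ x) = a := by
  classical
  have := Fintype.ofFinite Ω
  obtain ⟨σ, hσ⟩ := Finite.exists_max
    fun σ : Equiv.Perm Ω => (Finset.univ.filter fun x => p x = q (σ x)).card
  refine ⟨σ, fun a => ?_⟩
  by_contra! h
  obtain ⟨⟨y, hqy, hpy⟩, x, hpx, hqx⟩ := h
  refine (hσ (σ * Equiv.swap x y)).not_gt (Finset.card_lt_card ?_)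
  refine Finset.ssubset_iff_of_subset (fun z hz => ?_) |>.2 ⟨x, ?_, ?_⟩
  · simp only [Finset.mem_filter, Finset.mem_univ, true_and] at hz ⊢
    have hzx : z ≠ x := by rintro rfl; exact hqx (hz.symm.trans hpx)
    have hzy : z ≠ y := by rintro rfl; exact hpy (hz.trans hqy)
    rwa [Equiv.Perm.mul_apply, Equiv.swap_apply_of_ne_of_ne hzx hzy]
  · refine Finset.mem_filter.2 ⟨Finset.mem_univ _, ?_⟩
    rw [Equiv.Perm.mul_apply, Equiv.swap_apply_left, hqy, hpx]
  · simp only [Finset.mem_filter, Finset.mem_univ, true_and, hpx]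
    exact fun h => hqx h.symm

lemma sum_abs_ite_sub_ite [Fintype κ] [DecidableEq κ] (b c : κ) :
    ∑ a, |(if b = a then (1 : ℝ) else 0) - if c = a then 1 else 0| =
      2 * if b ≠ c then 1 else 0 := by
  by_cases h : b = c
  · simp only [h, ne_eq, not_true_eq_false, if_false, sub_self, abs_zero, Finset.sum_const_zero,
      mul_zero]
  · have abs_sub (a : κ) : |(if b = a then (1 : ℝ) else 0) - if c = a then 1 else 0| =
        (if b = a then 1 else 0) + if c = a then 1 else 0 := by
      split_ifs with h₁ h₂
      · exact absurd (h₁.trans h₂.symm) h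
      all_goals norm_num
    simp only [abs_sub, Finset.sum_add_distrib, Finset.sum_ite_eq, Finset.mem_univ, if_true, ne_eq,
      h, not_false_iff]
    norm_num

lemma exists_perm_two_mul_sum_ne_eq [Fintype Ω] [Nonempty Ω] [Fintype κ] [DecidableEq κ]
    (p q : Ω → κ) :
    ∃ σ : Equiv.Perm Ω,
      2 * ∑ x, (stdSimplex.barycenter : stdSimplex ℝ Ω) x * (if p x ≠ q (σ x) then 1 else 0) =
        ∑ a, |stdSimplex.map p (stdSimplex.barycenter : stdSimplex ℝ Ω) a -
          stdSimplex.map q (stdSimplex.barycenter : stdSimplex ℝ Ω) a| := by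
  obtain ⟨σ, hσ⟩ := exists_perm_fiber_subset p q
  let diff (a : κ) (x : Ω) : ℝ := (if p x = a then 1 else 0) - if q (σ x) = a then 1 else 0
  have map_sub (a : κ) :
      stdSimplex.map p (stdSimplex.barycenter : stdSimplex ℝ Ω) a -
        stdSimplex.map q (stdSimplex.barycenter : stdSimplex ℝ Ω) a =
      ∑ x, (stdSimplex.barycenter : stdSimplex ℝ Ω) x * diff a x := by
    have hq := map_apply (stdSimplex.barycenter : stdSimplex ℝ Ω) q a
    nth_rewrite 2 [← map_equiv_barycenter σ] at hq
    rw [sum_map_mul] at hq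
    simp only [diff, mul_sub, Finset.sum_sub_distrib, ← hq, ← map_apply]
  have abs_map_sub (a : κ) :
      |∑ x, (stdSimplex.barycenter : stdSimplex ℝ Ω) x * diff a x| =
        ∑ x, (stdSimplex.barycenter : stdSimplex ℝ Ω) x * |diff a x| := by
    rcases hσ a with h | h
    · have hdiff (x : Ω) : 0 ≤ diff a x := by
        dsimp only [diff]
        split_ifs with h₁ h₂ h₂ <;> first | exact absurd (h x h₂) h₁ | norm_num
      simp only [abs_of_nonneg (hdiff _), abs_of_nonneg (le_sum_mul hdiff)]
    · have hdiff (x : Ω) : diff a x ≤ 0 := by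
        dsimp only [diff]
        split_ifs with h₁ h₂ h₂ <;> first | exact absurd (h x h₁) h₂ | norm_num
      simp only [abs_of_nonpos (hdiff _), abs_of_nonpos (sum_mul_le hdiff), mul_neg,
        Finset.sum_neg_distrib]
  refine ⟨σ, ?_⟩
  simp only [map_sub, abs_map_sub, Finset.mul_sum, mul_left_comm (2 : ℝ), ← sum_abs_ite_sub_ite]
  exact Finset.sum_comm

lemma CutBounded.comp_sub_comp [Fintype Ω] [DecidableEq κ] (w : stdSimplex ℝ Ω)
    {D : κ → κ → ℝ} (hD : ∀ a b, D a b ∈ Icc (0 : ℝ) 1) (p q : Ω → κ) :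
    CutBounded w (fun x y => D (p x) (p y) - D (q x) (q y))
      (2 * ∑ x, w x * if p x ≠ q x then 1 else 0) := by
  intro s t hs ht
  let ne (x : Ω) : ℝ := if p x ≠ q x then 1 else 0
  have pointwise (x y : Ω) :
      |(D (p x) (p y) - D (q x) (q y)) * (s x * t y)| ≤ ne x + ne y := by
    have hst : |s x * t y| ≤ 1 := by
      rw [abs_of_nonneg (mul_nonneg (hs x).1 (ht y).1)]
      exact mul_le_one₀ (hs x).2 (ht y).1 (ht y).2
    rw [abs_mul]
    refine (mul_le_of_le_one_right (abs_nonneg _) hst).trans ?_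
    have hsub := abs_sub_le_of_le_of_le (hD (p x) (p y)).1 (hD (p x) (p y)).2 (hD (q x) (q y)).1
      (hD (q x) (q y)).2
    by_cases hx : p x = q x
    · by_cases hy : p y = q y
      · simp [ne, hx, hy]
      · simpa [ne, hx, hy] using hsub
    · simp only [ne, ne_eq, hx, not_false_iff, if_true]
      split_ifs <;> linarith
  have sum_ne_add : ∑ x, w x * ∑ y, w y * (ne x + ne y) = 2 * ∑ x, w x * ne x := by
    simp only [mul_add, Finset.sum_add_distrib, sum_mul_const, two_mul]
  rw [cutForm, abs_le, ← sum_ne_add, ← Finset.sum_neg_distrib]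
  simp only [← mul_neg, ← Finset.sum_neg_distrib]
  exact ⟨sum_mul_mono fun x => sum_mul_mono fun y => (abs_le.1 (pointwise x y)).1,
    sum_mul_mono fun x => sum_mul_mono fun y => (abs_le.1 (pointwise x y)).2⟩

variable [Fintype Ω] [Nonempty Ω] [Fintype ι] [Fintype ι'] [Fintype ι''] {w : stdSimplex ℝ ι}
  {w' : stdSimplex ℝ ι'} {w'' : stdSimplex ℝ ι''} {A : ι → ι → ℝ} {B : ι' → ι' → ℝ}
  {C : ι'' → ι'' → ℝ} {c : ℝ} {M : ℕ} {a : Ω → ι} {b : Ω → ι'} {d : Ω → ι''}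

lemma HaveCommonRegularization.exists_perm_cutBounded (hc : 0 ≤ c)
    (h : HaveCommonRegularization c M w A w' B)
    (ha : stdSimplex.map a (stdSimplex.barycenter : stdSimplex ℝ Ω) = w)
    (hb : stdSimplex.map b (stdSimplex.barycenter : stdSimplex ℝ Ω) = w') :
    ∃ σ : Equiv.Perm Ω, CutBounded stdSimplex.barycenter
      (fun x y => A (a x) (a y) - B (b (σ x)) (b (σ y))) (3 * c) := by
  obtain ⟨P, Q, D, hD, hA, hB, hPQ⟩ := h
  subst ha hb
  rw [fourCycleDensity_map] at hA hB
  simp only [stdSimplex.map_comp_apply] at hPQ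
  obtain ⟨σ, hσ⟩ := exists_perm_two_mul_sum_ne_eq (fun x => P (a x)) fun x => Q (b x)
  have hA' := CutBounded.of_fourCycleDensity_le hc hA
  have hB' := (CutBounded.of_fourCycleDensity_le hc hB).comp_equiv (map_equiv_barycenter σ)
  have hlabels := (CutBounded.comp_sub_comp stdSimplex.barycenter hD (fun x => P (a x))
    fun x => Q (b (σ x))).mono (hσ.trans_le hPQ)
  refine ⟨σ, ?_⟩
  convert (hA'.sub hB').add hlabels using 1
  · funext x y
    simp only [residual]
    ring
  · ring

lemma exists_perm_cutBounded_of_haveCommonRegularization (hc : 0 ≤ c)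
    (hA : HaveCommonRegularization c M w A w'' C) (hB : HaveCommonRegularization c M w' B w'' C)
    (ha : stdSimplex.map a (stdSimplex.barycenter : stdSimplex ℝ Ω) = w)
    (hb : stdSimplex.map b (stdSimplex.barycenter : stdSimplex ℝ Ω) = w')
    (hd : stdSimplex.map d (stdSimplex.barycenter : stdSimplex ℝ Ω) = w'') :
    ∃ σ : Equiv.Perm Ω, CutBounded stdSimplex.barycenter
      (fun x y => A (a x) (a y) - B (b (σ x)) (b (σ y))) (6 * c) := by
  obtain ⟨σ, hσ⟩ := hA.exists_perm_cutBounded hc ha hd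
  obtain ⟨τ, hτ⟩ := hB.exists_perm_cutBounded hc hb hd
  refine ⟨σ.trans τ.symm, ?_⟩
  convert hσ.sub (hτ.comp_equiv (map_equiv_barycenter (σ.trans τ.symm))) using 1
  · funext x y
    simp only [Equiv.trans_apply, Equiv.apply_symm_apply]
    ring
  · ring

end Matching

section StepKernels

variable {X κ τ : Type*} [MeasurableSpace X] [Fintype κ] [MeasurableSpace κ]
  [MeasurableSingletonClass κ] [Fintype τ] [MeasurableSpace τ] [MeasurableSingletonClass τ]

lemma integral_comp_eq_sum (ν : Measure X) [IsFiniteMeasure ν] {c : X → κ} (hc : Measurable c)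
    (g : κ → ℝ) : ∫ x, g (c x) ∂ν = ∑ p, ν.real (c ⁻¹' {p}) * g p := by
  have := Measure.isFiniteMeasure_map ν c
  rw [← integral_map hc.aemeasurable (f := g) Integrable.of_finite.aestronglyMeasurable,
    integral_fintype Integrable.of_finite]
  simp only [map_measureReal_apply hc (measurableSet_singleton _), smul_eq_mul]

variable {μ : Measure X} [IsProbabilityMeasure μ] {c : X → κ} {d : X → τ}

/-- The law of a labelling `c` of a probability space by finitely many labels. -/
noncomputable def labelLaw (μ : Measure X) [IsProbabilityMeasure μ] (hc : Measurable c) :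
    stdSimplex ℝ κ :=
  ⟨fun p => μ.real (c ⁻¹' {p}), fun _ => measureReal_nonneg, by
    simpa using (integral_comp_eq_sum μ hc fun _ => 1).symm⟩

lemma sum_labelLaw_mul (hc : Measurable c) (g : κ → ℝ) :
    ∑ p, labelLaw μ hc p * g p = ∫ x, g (c x) ∂μ :=
  (integral_comp_eq_sum μ hc g).symm

lemma map_labelLaw (hc : Measurable c) (hd : Measurable d) {π : κ → τ}
    (h : ∀ᵐ x ∂μ, π (c x) = d x) : stdSimplex.map π (labelLaw μ hc) = labelLaw μ hd :=
  map_eq_of_forall_sum_mul_eq fun g => by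
    rw [sum_labelLaw_mul hc fun p => g (π p), sum_labelLaw_mul]
    exact integral_congr_ae (h.mono fun x hx => congrArg g hx)

lemma labelLaw_comp {φ : X → X} (hφ : MeasurePreserving φ μ μ) (hc : Measurable c) :
    labelLaw μ (hc.comp hφ.measurable) = labelLaw μ hc := by
  ext p
  exact hφ.measureReal_preimage (hc (measurableSet_singleton p)).nullMeasurableSet

lemma exists_setIntegral_comp_eq_sum (hc : Measurable c) (S : Set X) :
    ∃ s : κ → ℝ, (∀ p, s p ∈ Icc (0 : ℝ) 1) ∧
      ∀ g : κ → ℝ, ∫ x in S, g (c x) ∂μ = ∑ p, labelLaw μ hc p * (s p * g p) := by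
  have hle (p : κ) : (μ.restrict S).real (c ⁻¹' {p}) ≤ labelLaw μ hc p :=
    ENNReal.toReal_mono (measure_ne_top _ _) (Measure.restrict_apply_le _ _)
  refine ⟨fun p => (μ.restrict S).real (c ⁻¹' {p}) / labelLaw μ hc p, fun p =>
    ⟨div_nonneg measureReal_nonneg (stdSimplex.zero_le _ p),
      div_le_one_of_le₀ (hle p) (stdSimplex.zero_le _ p)⟩, fun g => ?_⟩
  rw [integral_comp_eq_sum _ hc]
  refine Finset.sum_congr rfl fun p _ => ?_
  have hzero (h0 : labelLaw μ hc p = 0) : (μ.restrict S).real (c ⁻¹' {p}) = 0 :=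
    ((hle p).trans_eq h0).antisymm measureReal_nonneg
  rw [← mul_assoc, mul_div_cancel_of_imp' hzero]

lemma setIntegral_preimage_comp_eq_sum (hc : Measurable c) (A : Finset κ) (g : κ → ℝ) :
    ∫ x in c ⁻¹' A, g (c x) ∂μ = ∑ p ∈ A, labelLaw μ hc p * g p := by
  classical
  have hA : ∫ x in c ⁻¹' A, g (c x) ∂μ = ∫ x, (A : Set κ).indicator g (c x) ∂μ :=
    (integral_indicator (hc A.measurableSet)).symm
  rw [hA, ← sum_labelLaw_mul hc]
  simp only [Set.indicator_apply, Finset.mem_coe, mul_ite, mul_zero, Finset.sum_ite_mem,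
    Finset.univ_inter]

instance isProbabilityMeasure_μ01 : IsProbabilityMeasure μ01 := ⟨by simp⟩

lemma setIntegral_eq_of_ae_eq {U V : ℝ → ℝ → ℝ} {S T : Set ℝ}
    (h : ∀ᵐ x ∂μ01, ∀ᵐ y ∂μ01, U x y = V x y) (hS : S ⊆ Icc 0 1) (hT : T ⊆ Icc 0 1) :
    ∫ x in S, ∫ y in T, U x y = ∫ x in S, ∫ y in T, V x y ∂μ01 ∂μ01 := by
  rw [← Measure.restrict_restrict_of_subset hS, ← Measure.restrict_restrict_of_subset hT]
  exact integral_congr_ae <| ae_restrict_of_ae <| h.mono fun x hx =>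
    integral_congr_ae (ae_restrict_of_ae hx)

variable {c : ℝ → κ} {U : ℝ → ℝ → ℝ} {u : κ → κ → ℝ} {C : ℝ}

lemma exists_setIntegral_eq_cutForm (hc : Measurable c)
    (hU : ∀ᵐ x ∂μ01, ∀ᵐ y ∂μ01, U x y = u (c x) (c y)) {S T : Set ℝ} (hS : S ⊆ Icc 0 1)
    (hT : T ⊆ Icc 0 1) :
    ∃ s t : κ → ℝ, (∀ p, s p ∈ Icc (0 : ℝ) 1) ∧ (∀ q, t q ∈ Icc (0 : ℝ) 1) ∧
      ∫ x in S, ∫ y in T, U x y = cutForm (labelLaw μ01 hc) u s t := by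
  obtain ⟨s, hs, hs_int⟩ := exists_setIntegral_comp_eq_sum (μ := μ01) hc S
  obtain ⟨t, ht, ht_int⟩ := exists_setIntegral_comp_eq_sum (μ := μ01) hc T
  refine ⟨s, t, hs, ht, ?_⟩
  rw [setIntegral_eq_of_ae_eq hU hS hT, cutForm_eq_sum_mul]
  simp only [ht_int (u _), hs_int fun p => ∑ q, labelLaw μ01 hc q * (t q * u p q)]

lemma mem_upperBounds_of_cutBounded (hc : Measurable c)
    (hU : ∀ᵐ x ∂μ01, ∀ᵐ y ∂μ01, U x y = u (c x) (c y)) (h : CutBounded (labelLaw μ01 hc) u C) :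
    C ∈ upperBounds {r : ℝ | ∃ S T : Set ℝ, MeasurableSet S ∧ MeasurableSet T ∧
      S ⊆ Icc (0 : ℝ) 1 ∧ T ⊆ Icc (0 : ℝ) 1 ∧ r = |∫ x in S, ∫ y in T, U x y|} := by
  rintro _ ⟨S, T, -, -, hS, hT, rfl⟩
  obtain ⟨s, t, hs, ht, hst⟩ := exists_setIntegral_eq_cutForm hc hU hS hT
  exact hst ▸ h s t hs ht

lemma cutNorm_le_iff_cutBounded (hc : Measurable c)
    (hU : ∀ᵐ x ∂μ01, ∀ᵐ y ∂μ01, U x y = u (c x) (c y)) :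
    cutNorm U ≤ C ↔ CutBounded (labelLaw μ01 hc) u C := by
  refine ⟨fun h => .of_forall_finset fun A B => ?_, fun h => ?_⟩
  · obtain ⟨K, hK⟩ := Finite.exists_le fun p : κ × κ => |u p.1 p.2|
    have hbdd := mem_upperBounds_of_cutBounded hc hU (.of_abs_le fun p q => hK (p, q))
    refine le_trans (le_csSup ⟨K, hbdd⟩ ⟨c ⁻¹' A ∩ Icc 0 1, c ⁻¹' B ∩ Icc 0 1,
      (hc A.measurableSet).inter measurableSet_Icc, (hc B.measurableSet).inter measurableSet_Icc,
      inter_subset_right, inter_subset_right, congrArg _ ?_⟩) h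
    rw [setIntegral_eq_of_ae_eq hU inter_subset_right inter_subset_right]
    have restrict_inter (S : Set ℝ) : μ01.restrict (S ∩ Icc 0 1) = μ01.restrict S :=
      Measure.restrict_congr_set <| inter_ae_eq_left_of_ae_eq_univ <|
        eventuallyEq_univ.2 (ae_restrict_mem measurableSet_Icc)
    simp only [restrict_inter, setIntegral_preimage_comp_eq_sum hc B (u _),
      setIntegral_preimage_comp_eq_sum hc A fun p => ∑ q ∈ B, labelLaw μ01 hc q * u p q,
      Finset.mul_sum]
  · exact csSup_le ⟨_, ∅, ∅, .empty, .empty, empty_subset _, empty_subset _, rfl⟩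
      (mem_upperBounds_of_cutBounded hc hU h)

lemma cutNorm_nonneg (U : ℝ → ℝ → ℝ) : 0 ≤ cutNorm U :=
  Real.sSup_nonneg <| by
    rintro _ ⟨S, T, -, -, -, -, rfl⟩
    exact abs_nonneg _

lemma cutDist_le_cutNorm {φ : ℝ → ℝ} (hφ : IsInvMeasurePreserving φ) (U W : ℝ → ℝ → ℝ) :
    cutDist U W ≤ cutNorm fun x y => U x y - W (φ x) (φ y) :=
  csInf_le ⟨0, by rintro _ ⟨ψ, -, rfl⟩; exact cutNorm_nonneg _⟩ ⟨φ, hφ, rfl⟩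

end StepKernels

section Cells

variable {n : ℕ} [NeZero n]

/-- The `p`-th of the `n` consecutive half-open intervals of length `1 / n` that make up
`[0, 1)`. -/
def cell (n : ℕ) (p : Fin n) : Set ℝ :=
  Ico (((p : ℕ) : ℝ) / n) ((((p : ℕ) : ℝ) + 1) / n)

/-- The index of the cell containing `x`, for `x ∈ [0, 1)`. -/
noncomputable def cellIndex (n : ℕ) [NeZero n] (x : ℝ) : Fin n := Fin.ofNat n ⌊(n : ℝ) * x⌋₊

lemma ae_mem_Ico : ∀ᵐ x ∂μ01, x ∈ Ico (0 : ℝ) 1 := by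
  rw [μ01, ← Measure.restrict_congr_set Ico_ae_eq_Icc]
  exact ae_restrict_mem measurableSet_Ico

lemma measurable_cellIndex : Measurable (cellIndex n) :=
  (measurable_of_countable (Fin.ofNat n)).comp
    (Nat.measurable_floor.comp (measurable_const_mul _))

lemma cellIndex_val {x : ℝ} (hx : x ∈ Ico (0 : ℝ) 1) : (cellIndex n x : ℕ) = ⌊(n : ℝ) * x⌋₊ := by
  have hn : (0 : ℝ) < n := Nat.cast_pos.2 (NeZero.pos n)
  refine (Fin.val_ofNat n _).trans (Nat.mod_eq_of_lt ?_)
  exact (Nat.floor_lt (mul_nonneg hn.le hx.1)).2 (mul_lt_of_lt_one_right hn hx.2)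

lemma mem_cell_iff {x : ℝ} {p : Fin n} :
    x ∈ cell n p ↔ ((p : ℕ) : ℝ) ≤ n * x ∧ n * x < (p : ℕ) + 1 := by
  have hn : (0 : ℝ) < n := Nat.cast_pos.2 (NeZero.pos n)
  rw [cell, mem_Ico, div_le_iff₀' hn, lt_div_iff₀' hn]

lemma cellIndex_eq_iff {x : ℝ} (hx : x ∈ Ico (0 : ℝ) 1) {p : Fin n} :
    cellIndex n x = p ↔ x ∈ cell n p := by
  rw [mem_cell_iff, Fin.ext_iff, cellIndex_val hx,
    Nat.floor_eq_iff (mul_nonneg (Nat.cast_nonneg _) hx.1)]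

lemma cell_subset_Ico (p : Fin n) : cell n p ⊆ Ico 0 1 := by
  have hn : (0 : ℝ) < n := Nat.cast_pos.2 (NeZero.pos n)
  refine Ico_subset_Ico (by positivity) ((div_le_one hn).2 ?_)
  exact_mod_cast p.2

lemma cellIndex_preimage_inter (p : Fin n) : cellIndex n ⁻¹' {p} ∩ Ico 0 1 = cell n p := by
  ext x
  exact ⟨fun h => (cellIndex_eq_iff h.2).1 h.1, fun h =>
    ⟨(cellIndex_eq_iff (cell_subset_Ico p h)).2 h, cell_subset_Ico p h⟩⟩

lemma labelLaw_cellIndex :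
    labelLaw μ01 (measurable_cellIndex (n := n)) = stdSimplex.barycenter := by
  ext p
  have hn : (0 : ℝ) < n := Nat.cast_pos.2 (NeZero.pos n)
  change μ01.real (cellIndex n ⁻¹' {p}) = (Fintype.card (Fin n) : ℝ)⁻¹
  rw [μ01, ← Measure.restrict_congr_set Ico_ae_eq_Icc,
    measureReal_restrict_apply (measurable_cellIndex (measurableSet_singleton p)),
    cellIndex_preimage_inter, cell, Real.volume_real_Ico_of_le (by gcongr; linarith),
    Fintype.card_fin]
  ring

lemma μ01_eq_sum_restrict_cell : μ01 = Measure.sum fun p : Fin n => volume.restrict (cell n p) := by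
  have cover : ⋃ p, cell n p = Ico 0 1 := by
    refine subset_antisymm (iUnion_subset cell_subset_Ico) fun x hx => ?_
    exact mem_iUnion.2 ⟨cellIndex n x, (cellIndex_eq_iff hx).1 rfl⟩
  have disjoint : Pairwise (Function.onFun Disjoint (cell n)) := fun p q hpq =>
    disjoint_left.2 fun x hp hq => hpq <|
      ((cellIndex_eq_iff (cell_subset_Ico p hp)).2 hp).symm.trans
        ((cellIndex_eq_iff (cell_subset_Ico q hq)).2 hq)
  rw [μ01, ← Measure.restrict_congr_set Ico_ae_eq_Icc, ← cover,
    Measure.restrict_iUnion disjoint fun _ => measurableSet_Ico]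

/-- The interval exchange that permutes the `n` cells of `[0, 1)` according to `σ`. -/
noncomputable def exchange (σ : Equiv.Perm (Fin n)) (x : ℝ) : ℝ :=
  x + (Ico (0 : ℝ) 1).indicator
    (fun x => (((σ (cellIndex n x) : ℕ) : ℝ) - (cellIndex n x : ℕ)) / n) x

lemma measurable_exchange (σ : Equiv.Perm (Fin n)) : Measurable (exchange σ) :=
  measurable_id.add <| Measurable.indicator
    ((measurable_of_countable fun p : Fin n => (((σ p : ℕ) : ℝ) - (p : ℕ)) / n).comp
      measurable_cellIndex) measurableSet_Ico

lemma exchange_of_mem_cell (σ : Equiv.Perm (Fin n)) {x : ℝ} {p : Fin n} (hx : x ∈ cell n p) :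
    exchange σ x = x + (((σ p : ℕ) : ℝ) - (p : ℕ)) / n := by
  have hx01 := cell_subset_Ico p hx
  rw [exchange, indicator_of_mem hx01, (cellIndex_eq_iff hx01).2 hx]

lemma exchange_of_notMem_Ico (σ : Equiv.Perm (Fin n)) {x : ℝ} (hx : x ∉ Ico (0 : ℝ) 1) :
    exchange σ x = x := by
  rw [exchange, indicator_of_notMem hx, add_zero]

lemma add_div_mem_cell_iff {x : ℝ} {p q : Fin n} :
    x + (((q : ℕ) : ℝ) - (p : ℕ)) / n ∈ cell n q ↔ x ∈ cell n p := by
  have hn : (n : ℝ) ≠ 0 := NeZero.ne _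
  rw [mem_cell_iff, mem_cell_iff, mul_add, mul_div_cancel₀ _ hn]
  constructor <;> rintro ⟨h₁, h₂⟩ <;> constructor <;> linarith

lemma exchange_mem_cell (σ : Equiv.Perm (Fin n)) {x : ℝ} {p : Fin n} (hx : x ∈ cell n p) :
    exchange σ x ∈ cell n (σ p) := by
  rw [exchange_of_mem_cell σ hx]
  exact add_div_mem_cell_iff.2 hx

lemma mem_cell_cellIndex {x : ℝ} (hx : x ∈ Ico (0 : ℝ) 1) : x ∈ cell n (cellIndex n x) :=
  (cellIndex_eq_iff hx).1 rfl

lemma exchange_mem_Ico (σ : Equiv.Perm (Fin n)) {x : ℝ} (hx : x ∈ Ico (0 : ℝ) 1) :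
    exchange σ x ∈ Ico (0 : ℝ) 1 :=
  cell_subset_Ico _ (exchange_mem_cell σ (mem_cell_cellIndex hx))

lemma cellIndex_exchange (σ : Equiv.Perm (Fin n)) {x : ℝ} (hx : x ∈ Ico (0 : ℝ) 1) :
    cellIndex n (exchange σ x) = σ (cellIndex n x) :=
  (cellIndex_eq_iff (exchange_mem_Ico σ hx)).2 (exchange_mem_cell σ (mem_cell_cellIndex hx))

lemma exchange_symm_exchange (σ : Equiv.Perm (Fin n)) (x : ℝ) :
    exchange σ.symm (exchange σ x) = x := by
  by_cases hx : x ∈ Ico (0 : ℝ) 1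
  · have hcell := mem_cell_cellIndex (n := n) hx
    rw [exchange_of_mem_cell _ (exchange_mem_cell σ hcell), exchange_of_mem_cell σ hcell,
      Equiv.symm_apply_apply]
    ring
  · rw [exchange_of_notMem_Ico σ hx, exchange_of_notMem_Ico _ hx]

lemma map_exchange_restrict_cell (σ : Equiv.Perm (Fin n)) (p : Fin n) :
    (volume.restrict (cell n p)).map (exchange σ) = volume.restrict (cell n (σ p)) := by
  have preimage : (fun x => x + (((σ p : ℕ) : ℝ) - (p : ℕ)) / n) ⁻¹' cell n (σ p) = cell n p :=
    ext fun x => add_div_mem_cell_iff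
  have translation := (measurePreserving_add_right volume
    ((((σ p : ℕ) : ℝ) - (p : ℕ)) / n)).restrict_preimage (s := cell n (σ p)) measurableSet_Ico
  rw [preimage] at translation
  rw [← translation.map_eq]
  exact Measure.map_congr <| (ae_restrict_mem measurableSet_Ico).mono fun x hx =>
    exchange_of_mem_cell σ hx

lemma measurePreserving_exchange (σ : Equiv.Perm (Fin n)) :
    MeasurePreserving (exchange σ) μ01 μ01 := by
  refine ⟨measurable_exchange σ, ?_⟩
  rw [μ01_eq_sum_restrict_cell (n := n), Measure.map_sum (measurable_exchange σ).aemeasurable]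
  simp only [map_exchange_restrict_cell]
  exact Measure.sum_comp_equiv σ fun p => volume.restrict (cell n p)

lemma isInvMeasurePreserving_exchange (σ : Equiv.Perm (Fin n)) :
    IsInvMeasurePreserving (exchange σ) := by
  have mapsTo (τ : Equiv.Perm (Fin n)) : MapsTo (exchange τ) (Icc 0 1) (Icc 0 1) := fun x hx => by
    by_cases h : x ∈ Ico (0 : ℝ) 1
    · exact Ico_subset_Icc_self (exchange_mem_Ico τ h)
    · rwa [exchange_of_notMem_Ico τ h]
  exact ⟨mapsTo σ, measurePreserving_exchange σ, exchange σ.symm, mapsTo _,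
    measurePreserving_exchange _, fun x _ => exchange_symm_exchange σ x,
    fun x _ => exchange_symm_exchange σ.symm x⟩

lemma exists_cellIndex_eq_comp {L : ℕ} [NeZero L] (h : n ∣ L) :
    ∃ a : Fin L → Fin n, ∀ x ∈ Ico (0 : ℝ) 1, a (cellIndex L x) = cellIndex n x := by
  obtain ⟨q, rfl⟩ := h
  have hq : (q : ℝ) ≠ 0 := Nat.cast_ne_zero.2 (right_ne_zero_of_mul (NeZero.ne (n * q)))
  refine ⟨fun p => Fin.ofNat n (p / q), fun x hx => ?_⟩
  dsimp only
  rw [cellIndex_val hx, ← Nat.floor_div_natCast, cellIndex]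
  congr 2
  push_cast
  field_simp

lemma exists_map_barycenter_eq_of_dvd {L : ℕ} [NeZero L] (h : n ∣ L) :
    ∃ a : Fin L → Fin n, (∀ x ∈ Ico (0 : ℝ) 1, a (cellIndex L x) = cellIndex n x) ∧
      stdSimplex.map a (stdSimplex.barycenter : stdSimplex ℝ (Fin L)) = stdSimplex.barycenter := by
  obtain ⟨a, ha⟩ := exists_cellIndex_eq_comp h
  refine ⟨a, ha, ?_⟩
  rw [← labelLaw_cellIndex, ← labelLaw_cellIndex]
  exact map_labelLaw _ _ (ae_mem_Ico.mono ha)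

end Cells

section Graphons

/-- The adjacency matrix of `G`, as a real kernel on its vertex set. -/
noncomputable def adjKernel {V : Type*} (G : SimpleGraph V) (x y : V) : ℝ :=
  open scoped Classical in if G.Adj x y then 1 else 0

lemma adjKernel_eq_zero_or_one {V : Type*} (G : SimpleGraph V) (x y : V) :
    adjKernel G x y = 0 ∨ adjKernel G x y = 1 := by
  unfold adjKernel
  split_ifs <;> simp

variable {n n' : ℕ} [NeZero n] [NeZero n'] {G : SimpleGraph (Fin n)} {G' : SimpleGraph (Fin n')}

lemma graphonOf_eq_adjKernel (G : SimpleGraph (Fin n)) {x y : ℝ} (hx : x ∈ Ico (0 : ℝ) 1)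
    (hy : y ∈ Ico (0 : ℝ) 1) : graphonOf G x y = adjKernel G (cellIndex n x) (cellIndex n y) := by
  classical
  refine if_congr ⟨?_, fun h => ⟨_, _, h, mem_cell_cellIndex hx, mem_cell_cellIndex hy⟩⟩ rfl rfl
  rintro ⟨i, j, h, hi, hj⟩
  rwa [(cellIndex_eq_iff hx).2 hi, (cellIndex_eq_iff hy).2 hj]

lemma cutDist_graphonOf_le_of_perm {L : ℕ} [NeZero L] {a : Fin L → Fin n} {b : Fin L → Fin n'}
    (ha : ∀ x ∈ Ico (0 : ℝ) 1, a (cellIndex L x) = cellIndex n x)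
    (hb : ∀ x ∈ Ico (0 : ℝ) 1, b (cellIndex L x) = cellIndex n' x) {σ : Equiv.Perm (Fin L)} {c : ℝ}
    (h : CutBounded stdSimplex.barycenter
      (fun p q => adjKernel G (a p) (a q) - adjKernel G' (b (σ p)) (b (σ q))) c) :
    cutDist (graphonOf G) (graphonOf G') ≤ c := by
  refine (cutDist_le_cutNorm (isInvMeasurePreserving_exchange σ) _ _).trans ?_
  rw [← labelLaw_cellIndex] at h
  refine (cutNorm_le_iff_cutBounded measurable_cellIndex ?_).2 h
  filter_upwards [ae_mem_Ico] with x hx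
  filter_upwards [ae_mem_Ico] with y hy
  rw [graphonOf_eq_adjKernel G hx hy,
    graphonOf_eq_adjKernel G' (exchange_mem_Ico σ hx) (exchange_mem_Ico σ hy),
    ← cellIndex_exchange σ hx, ← cellIndex_exchange σ hy, ha x hx, ha y hy,
    hb _ (exchange_mem_Ico σ hx), hb _ (exchange_mem_Ico σ hy)]

lemma cutDist_graphonOf_le_of_haveCommonRegularization {k M : ℕ} [NeZero k]
    {H : SimpleGraph (Fin k)} {c : ℝ} (hc : 0 ≤ c)
    (h : HaveCommonRegularization c M stdSimplex.barycenter (adjKernel G)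
      stdSimplex.barycenter (adjKernel H))
    (h' : HaveCommonRegularization c M stdSimplex.barycenter (adjKernel G')
      stdSimplex.barycenter (adjKernel H)) :
    cutDist (graphonOf G) (graphonOf G') ≤ 6 * c := by
  obtain ⟨a, ha, ha_map⟩ := exists_map_barycenter_eq_of_dvd (n := n) (L := n * n' * k)
    ⟨n' * k, mul_assoc _ _ _⟩
  obtain ⟨b, hb, hb_map⟩ := exists_map_barycenter_eq_of_dvd (n := n') (L := n * n' * k)
    ((dvd_mul_left _ _).mul_right _)
  obtain ⟨d, -, hd_map⟩ := exists_map_barycenter_eq_of_dvd (n := k) (L := n * n' * k)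
    (dvd_mul_left _ _)
  obtain ⟨σ, hσ⟩ := exists_perm_cutBounded_of_haveCommonRegularization hc h h' ha_map hb_map hd_map
  exact cutDist_graphonOf_le_of_perm ha hb hσ

end Graphons

section InverseCounting

variable {k n : ℕ}

lemma exists_tendsto_of_exists_tendsto_sum_le {P α : Type*} [PartialOrder P] [Fintype P]
    [DecidableLE P] {l : Filter α} {w : α → P → ℝ}
    (h : ∀ p, ∃ L, Tendsto (fun i => ∑ q, w i q * if p ≤ q then 1 else 0) l (nhds L)) (p : P) :
    ∃ L, Tendsto (fun i => w i p) l (nhds L) := by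
  classical
  induction p using WellFoundedGT.induction with
  | ind p ih =>
    obtain ⟨L, hL⟩ := h p
    have above (q : P) : ∃ L', Tendsto (fun i => w i q * if p < q then 1 else 0) l (nhds L') := by
      by_cases hpq : p < q
      · simpa only [if_pos hpq, mul_one] using ih q hpq
      · exact ⟨0, by simpa only [if_neg hpq, mul_zero] using tendsto_const_nhds⟩
    choose L' hL' using above
    refine ⟨L - ∑ q, L' q, (hL.sub (tendsto_finsetSum Finset.univ fun q _ => hL' q)).congr
      fun i => ?_⟩
    have le_sub_lt (q : P) : ((if p ≤ q then 1 else 0) - if p < q then 1 else 0 : ℝ) =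
        if q = p then 1 else 0 := by
      rcases eq_or_ne q p with rfl | hq
      · simp
      · simp [lt_iff_le_and_ne, hq, hq.symm]
    rw [← Finset.sum_sub_distrib]
    simp only [← mul_sub, le_sub_lt]
    simp only [mul_ite, mul_one, mul_zero, Finset.sum_ite_eq', Finset.mem_univ, if_true]

lemma exists_and_of_one_add_sum_abs_sub_lt {ι : Type*} [Fintype ι] {w w' : stdSimplex ℝ ι}
    {p q : ι → Prop} [DecidablePred p] [DecidablePred q]
    (h : 1 + ∑ x, |w x - w' x| <
      ∑ x, w x * (if p x then 1 else 0) + ∑ x, w' x * if q x then 1 else 0) :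
    ∃ x, p x ∧ q x := by
  by_contra! hpq
  refine h.not_ge ?_
  calc
    _ = ∑ x, (w x * (if p x then 1 else 0) + w' x * if q x then 1 else 0) :=
      Finset.sum_add_distrib.symm
    _ ≤ ∑ x, (w x + |w x - w' x|) := Finset.sum_le_sum fun x _ => by
      have hw := stdSimplex.zero_le w x
      have hsub := neg_abs_le (w x - w' x)
      have habs := abs_nonneg (w x - w' x)
      by_cases hp : p x
      · rw [if_pos hp, if_neg (hpq x hp)]
        linarith
      · rw [if_neg hp]
        split_ifs <;> linarith
    _ = 1 + ∑ x, |w x - w' x| := by rw [Finset.sum_add_distrib, stdSimplex.sum_eq_one]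

open scoped Classical in
/-- The density of `H` among the graphs induced by `k`-tuples of vertices of `G`: the law, at `H`,
of the graph `G` pulled back along a uniformly random map `Fin k → Fin n`. -/
noncomputable def inducedDensity (G : SimpleGraph (Fin n)) (H : SimpleGraph (Fin k)) : ℝ :=
  (Finset.univ.filter fun f : Fin k → Fin n => G.comap f = H).card / (n : ℝ) ^ k

open scoped Classical in
lemma homDensityFin_eq_sum_inducedDensity (F : SimpleGraph (Fin k)) (G : SimpleGraph (Fin n)) :
    homDensityFin F G = ∑ H, inducedDensity G H * if F ≤ H then 1 else 0 := by
  have hom_iff (f : Fin k → Fin n) : (∀ i j, F.Adj i j → G.Adj (f i) (f j)) ↔ F ≤ G.comap f :=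
    Iff.rfl
  simp only [homDensityFin, inducedDensity, hom_iff, mul_ite, mul_one, mul_zero]
  rw [← Finset.sum_filter, ← Finset.sum_div, Fintype.card_subtype, Finset.card_eq_sum_card_fiberwise
    (f := fun f => G.comap f) (t := Finset.univ.filter (F ≤ ·)) fun f hf => by simpa using hf]
  push_cast
  congr 1
  refine Finset.sum_congr rfl fun H hH => ?_
  rw [Finset.filter_filter]
  congr 2
  ext f
  simp only [Finset.mem_filter, Finset.mem_univ, true_and, and_iff_right_iff_imp] at hH ⊢
  rintro rfl
  exact hH

lemma map_comap_prodWeight [NeZero n] (G : SimpleGraph (Fin n)) (H : SimpleGraph (Fin k)) :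
    stdSimplex.map (fun f => G.comap f) (prodWeight (Fin k) stdSimplex.barycenter) H =
      inducedDensity G H := by
  classical
  have uniform (f : Fin k → Fin n) :
      prodWeight (Fin k) (stdSimplex.barycenter : stdSimplex ℝ (Fin n)) f = ((n : ℝ) ^ k)⁻¹ := by
    change ∏ _ : Fin k, (Fintype.card (Fin n) : ℝ)⁻¹ = _
    simp
  simp only [map_apply, uniform, ← Finset.mul_sum, Finset.sum_boole, inducedDensity]
  rw [div_eq_inv_mul]

open scoped Classical in
lemma exists_le_sum_map_comap_haveCommonRegularization {c : ℝ} (hc : 0 < c) :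
    ∃ M k : ℕ, ∀ {n : ℕ} [NeZero n] (G : SimpleGraph (Fin n)),
      3 / 4 ≤ ∑ H, stdSimplex.map (fun f => G.comap f)
          (prodWeight (Fin (k + 1)) stdSimplex.barycenter) H *
        if HaveCommonRegularization c M stdSimplex.barycenter (adjKernel G) stdSimplex.barycenter
          (adjKernel H) then 1 else 0 := by
  obtain ⟨M, k, hk⟩ := exists_le_sum_prodWeight_haveCommonRegularization hc
  refine ⟨M, k, fun G => ?_⟩
  rw [sum_map_mul]
  exact hk stdSimplex.barycenter (adjKernel_eq_zero_or_one G)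

lemma exists_cutDist_le_of_sum_abs_inducedDensity_sub_lt {ε : ℝ} (hε : 0 < ε) :
    ∃ k : ℕ, ∀ {n n' : ℕ} [NeZero n] [NeZero n'] (G : SimpleGraph (Fin n))
      (G' : SimpleGraph (Fin n')),
      ∑ H : SimpleGraph (Fin k), |inducedDensity G H - inducedDensity G' H| < 1 / 2 →
      cutDist (graphonOf G) (graphonOf G') ≤ ε := by
  classical
  have hc : 0 < ε / 6 := by positivity
  obtain ⟨M, k, hk⟩ := exists_le_sum_map_comap_haveCommonRegularization hc
  refine ⟨k + 1, fun G G' hGG' => ?_⟩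
  simp only [← map_comap_prodWeight] at hGG'
  obtain ⟨H, hH, hH'⟩ := exists_and_of_one_add_sum_abs_sub_lt
    (lt_of_lt_of_le (by linarith) (add_le_add (hk G) (hk G')))
  linarith [cutDist_graphonOf_le_of_haveCommonRegularization hc.le hH hH']

lemma exists_forall_cutDist_le {N : ℕ → ℕ} {G : ∀ i, SimpleGraph (Fin (N i))}
    (hN : ∀ᶠ i in atTop, 0 < N i)
    (h : ∀ (m : ℕ) (F : SimpleGraph (Fin m)), ∃ L : ℝ,
      Tendsto (fun i => homDensityFin F (G i)) atTop (nhds L)) {ε : ℝ} (hε : 0 < ε) :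
    ∃ M : ℕ, ∀ i ≥ M, ∀ j ≥ M, cutDist (graphonOf (G i)) (graphonOf (G j)) ≤ ε := by
  classical
  obtain ⟨k, hk⟩ := exists_cutDist_le_of_sum_abs_inducedDensity_sub_lt hε
  simp only [homDensityFin_eq_sum_inducedDensity] at h
  choose P hP using exists_tendsto_of_exists_tendsto_sum_le (h k)
  have difference : Tendsto (fun p : ℕ × ℕ =>
      ∑ H : SimpleGraph (Fin k), |inducedDensity (G p.1) H - inducedDensity (G p.2) H|)
      (atTop ×ˢ atTop) (nhds 0) := by
    simpa using tendsto_finsetSum Finset.univ fun H _ =>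
      (((hP H).comp tendsto_fst).sub ((hP H).comp tendsto_snd)).abs
  have close := (difference.eventually_lt_const one_half_pos).and (hN.prod_mk hN)
  rw [prod_atTop_atTop_eq, eventually_atTop_prod_self'] at close
  obtain ⟨M, hM⟩ := close
  refine ⟨M, fun i hi j hj => ?_⟩
  obtain ⟨hlt, hi0, hj0⟩ := hM i hi j hj
  have := NeZero.of_pos hi0
  have := NeZero.of_pos hj0
  exact hk (G i) (G j) hlt

end InverseCounting

section DecoratedDensity

variable {α ι κ : Type*} [Fintype α] [DecidableEq α] [Fintype ι] [Fintype κ] {w : stdSimplex ℝ ι}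

-- Resample the coordinates `a` and `b`: with the others fixed, `S` depends only on the value at `a`
-- and `T` only on the value at `b`.
lemma abs_sum_prodWeight_mul_le_of_cutBounded {u : ι → ι → ℝ} {c : ℝ} (hu : CutBounded w u c)
    {a b : α} (hab : a ≠ b) {S T : (α → ι) → ℝ} (hS : ∀ h, S h ∈ Icc (0 : ℝ) 1)
    (hT : ∀ h, T h ∈ Icc (0 : ℝ) 1) (hSb : DependsOn S {b}ᶜ) (hTa : DependsOn T {a}ᶜ) :
    |∑ h, prodWeight α w h * (u (h a) (h b) * (S h * T h))| ≤ c := by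
  have resample : ∑ h, prodWeight α w h * (u (h a) (h b) * (S h * T h)) =
      ∑ h, prodWeight α w h * cutForm w u (fun x => S (Function.update h a x))
        fun y => T (Function.update h b y) := by
    rw [sum_prodWeight_mul_eq_update w b, sum_prodWeight_mul_eq_update w a]
    refine Finset.sum_congr rfl fun h _ => congrArg _ ?_
    refine Finset.sum_congr rfl fun x _ => congrArg _ ?_
    refine Finset.sum_congr rfl fun y _ => congrArg _ ?_
    rw [Function.update_self, Function.update_of_ne hab, Function.update_self,
      hSb (y := Function.update h a x) fun v hv => Function.update_of_ne hv _ _,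
      hTa (y := Function.update h b y) fun v hv => by
        rw [Function.update_comm hab, Function.update_of_ne hv]]
  rw [resample]
  exact abs_sum_mul_le fun h => hu _ _ (fun _ => hS _) fun _ => hT _

/-- The homomorphism density of the graph on `α` with edge set `E`, where each edge `e` is decorated
with a kernel `K e` of its own. -/
noncomputable def decoratedDensity (w : stdSimplex ℝ ι) (E : Finset (α × α))
    (K : α × α → ι → ι → ℝ) : ℝ :=
  ∑ h, prodWeight α w h * ∏ e ∈ E, K e (h e.1) (h e.2)

lemma decoratedDensity_map (w : stdSimplex ℝ ι) (π : ι → κ) (E : Finset (α × α))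
    (K : α × α → κ → κ → ℝ) :
    decoratedDensity (stdSimplex.map π w) E K =
      decoratedDensity w E fun e x y => K e (π x) (π y) := by
  rw [decoratedDensity, ← map_comp_prodWeight, sum_map_mul]
  rfl

end DecoratedDensity

section Counting

variable {α ι : Type*} [Fintype α] [LinearOrder α] [Fintype ι] {w : stdSimplex ℝ ι}
  {E : Finset (α × α)} {K K' : α × α → ι → ι → ℝ} {c : ℝ}

lemma abs_decoratedDensity_sub_le_of_eq_off (hE : ∀ e ∈ E, e.1 < e.2)
    (hK : ∀ e x y, K e x y ∈ Icc (0 : ℝ) 1) {e₀ : α × α} (he₀ : e₀ ∈ E)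
    (hKK' : ∀ e ≠ e₀, K e = K' e)
    (hcut : CutBounded w (fun x y => K e₀ x y - K' e₀ x y) c) :
    |decoratedDensity w E K - decoratedDensity w E K'| ≤ c := by
  classical
  let S (h : α → ι) := ∏ e ∈ E.erase e₀ with ¬(e.1 = e₀.2 ∨ e.2 = e₀.2), K e (h e.1) (h e.2)
  let T (h : α → ι) := ∏ e ∈ E.erase e₀ with e.1 = e₀.2 ∨ e.2 = e₀.2, K e (h e.1) (h e.2)
  have isolate : decoratedDensity w E K - decoratedDensity w E K' = ∑ h, prodWeight α w h *
      ((K e₀ (h e₀.1) (h e₀.2) - K' e₀ (h e₀.1) (h e₀.2)) * (S h * T h)) := by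
    simp only [decoratedDensity, ← Finset.sum_sub_distrib, ← mul_sub]
    refine Finset.sum_congr rfl fun h _ => congrArg _ ?_
    rw [← Finset.mul_prod_erase _ _ he₀, ← Finset.mul_prod_erase _ _ he₀, mul_comm (S h),
      Finset.prod_filter_mul_prod_filter_not, sub_mul]
    refine congrArg _ (congrArg _ (Finset.prod_congr rfl fun e he => ?_))
    rw [hKK' e (Finset.ne_of_mem_erase he)]
  have prod_mem (s : Finset (α × α)) (h : α → ι) :
      ∏ e ∈ s, K e (h e.1) (h e.2) ∈ Icc (0 : ℝ) 1 :=
    ⟨Finset.prod_nonneg fun e _ => (hK e _ _).1,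
      Finset.prod_le_one (fun e _ => (hK e _ _).1) fun e _ => (hK e _ _).2⟩
  rw [isolate]
  refine abs_sum_prodWeight_mul_le_of_cutBounded hcut (hE e₀ he₀).ne (prod_mem _) (prod_mem _)
    (fun h h' hh' => ?_) fun h h' hh' => ?_
  · refine Finset.prod_congr rfl fun e he => ?_
    obtain ⟨h₁, h₂⟩ := not_or.1 (Finset.mem_filter.1 he).2
    rw [hh' _ h₁, hh' _ h₂]
  · have off_source {e : α × α} (he : e ∈ E.erase e₀) (heb : e.1 = e₀.2 ∨ e.2 = e₀.2) :
        e.1 ≠ e₀.1 ∧ e.2 ≠ e₀.1 := by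
      have hlt := hE e (Finset.mem_of_mem_erase he)
      have hlt₀ := hE e₀ he₀
      have hne : ¬(e.1 = e₀.1 ∧ e.2 = e₀.2) := fun h =>
        Finset.ne_of_mem_erase he (Prod.ext h.1 h.2)
      grind
    refine Finset.prod_congr rfl fun e he => ?_
    obtain ⟨h₁, h₂⟩ := off_source (Finset.mem_filter.1 he).1 (Finset.mem_filter.1 he).2
    rw [hh' _ h₁, hh' _ h₂]

lemma abs_decoratedDensity_sub_le (hE : ∀ e ∈ E, e.1 < e.2)
    (hK : ∀ e x y, K e x y ∈ Icc (0 : ℝ) 1) (hK' : ∀ e x y, K' e x y ∈ Icc (0 : ℝ) 1)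
    (hcut : ∀ e ∈ E, CutBounded w (fun x y => K e x y - K' e x y) c) :
    |decoratedDensity w E K - decoratedDensity w E K'| ≤ E.card * c := by
  classical
  have hybrid (D : Finset (α × α)) (hD : D ⊆ E) :
      |decoratedDensity w E K - decoratedDensity w E (D.piecewise K' K)| ≤ D.card * c := by
    induction D using Finset.induction_on with
    | empty => simp
    | insert e D he ih =>
      have heE : e ∈ E := hD (Finset.mem_insert_self e D)
      have swap : |decoratedDensity w E (D.piecewise K' K) -
          decoratedDensity w E ((insert e D).piecewise K' K)| ≤ c := by
        refine abs_decoratedDensity_sub_le_of_eq_off hE (fun e' => ?_) heE (fun e' he' => ?_) ?_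
        · exact Finset.piecewise_cases D K' K (fun k => ∀ x y, k x y ∈ Icc (0 : ℝ) 1)
            (hK' e') (hK e')
        · exact (D.piecewise_insert_of_ne _ _ he').symm
        · rw [Finset.piecewise_eq_of_notMem _ _ _ he, Finset.piecewise_insert_self]
          exact hcut e heE
      rw [Finset.card_insert_of_notMem he]
      push_cast
      linarith [abs_sub_le (decoratedDensity w E K) (decoratedDensity w E (D.piecewise K' K))
        (decoratedDensity w E ((insert e D).piecewise K' K)),
        ih ((Finset.subset_insert e D).trans hD)]
  convert hybrid E subset_rfl using 3
  refine Finset.sum_congr rfl fun h _ => congrArg _ (Finset.prod_congr rfl fun e he => ?_)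
  rw [Finset.piecewise_eq_of_mem _ _ _ he]

end Counting

section HomDensity

variable {m n n' : ℕ}

open scoped Classical in
/-- The edges of `F`, each listed once with its smaller endpoint first. -/
noncomputable def edgePairs (F : SimpleGraph (Fin m)) : Finset (Fin m × Fin m) :=
  Finset.univ.filter fun e : Fin m × Fin m => e.1 < e.2 ∧ F.Adj e.1 e.2

lemma lt_of_mem_edgePairs {F : SimpleGraph (Fin m)} {e : Fin m × Fin m} (he : e ∈ edgePairs F) :
    e.1 < e.2 := by
  classical
  exact (Finset.mem_filter.1 he).2.1

open scoped Classical in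
lemma prod_edgePairs_adjKernel (F : SimpleGraph (Fin m)) (G : SimpleGraph (Fin n))
    (f : Fin m → Fin n) :
    ∏ e ∈ edgePairs F, adjKernel G (f e.1) (f e.2) = if F ≤ G.comap f then 1 else 0 := by
  have hom_iff : F ≤ G.comap f ↔ ∀ e ∈ edgePairs F, G.Adj (f e.1) (f e.2) := by
    refine ⟨fun h e he => h (Finset.mem_filter.1 he).2.2, fun h i j hij => ?_⟩
    rcases hij.ne.lt_or_gt with hlt | hlt
    · exact h (i, j) (Finset.mem_filter.2 ⟨Finset.mem_univ _, hlt, hij⟩)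
    · exact (h (j, i) (Finset.mem_filter.2 ⟨Finset.mem_univ _, hlt, hij.symm⟩)).symm
  simp only [adjKernel, Finset.prod_ite_zero, Finset.prod_const_one, hom_iff]

lemma homDensityFin_eq_decoratedDensity [NeZero n] (F : SimpleGraph (Fin m))
    (G : SimpleGraph (Fin n)) :
    homDensityFin F G =
      decoratedDensity stdSimplex.barycenter (edgePairs F) fun _ => adjKernel G := by
  classical
  simp only [homDensityFin_eq_sum_inducedDensity, ← map_comap_prodWeight, decoratedDensity,
    prod_edgePairs_adjKernel]
  exact sum_map_mul _ _ _

lemma adjKernel_mem_Icc {V : Type*} (G : SimpleGraph V) (x y : V) :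
    adjKernel G x y ∈ Icc (0 : ℝ) 1 := by
  rcases adjKernel_eq_zero_or_one G x y with h | h <;> simp [h]

variable [NeZero n] [NeZero n']

lemma abs_homDensityFin_sub_le_cutNorm {φ : ℝ → ℝ} (hφ : MeasurePreserving φ μ01 μ01)
    (F : SimpleGraph (Fin m)) (G : SimpleGraph (Fin n)) (G' : SimpleGraph (Fin n')) :
    |homDensityFin F G - homDensityFin F G'| ≤ (edgePairs F).card *
      cutNorm fun x y => graphonOf G x y - graphonOf G' (φ x) (φ y) := by
  have hc : Measurable fun x => (cellIndex n x, cellIndex n' (φ x)) :=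
    measurable_cellIndex.prodMk (measurable_cellIndex.comp hφ.measurable)
  have fst_law : stdSimplex.map Prod.fst (labelLaw μ01 hc) = stdSimplex.barycenter := by
    rw [map_labelLaw hc measurable_cellIndex (ae_of_all _ fun _ => rfl), labelLaw_cellIndex]
  have snd_law : stdSimplex.map Prod.snd (labelLaw μ01 hc) = stdSimplex.barycenter := by
    rw [map_labelLaw hc (measurable_cellIndex.comp hφ.measurable) (ae_of_all _ fun _ => rfl),
      labelLaw_comp hφ measurable_cellIndex, labelLaw_cellIndex]
  have mem_Ico := ae_mem_Ico.and (hφ.quasiMeasurePreserving.ae ae_mem_Ico)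
  have cut := (cutNorm_le_iff_cutBounded hc
    (U := fun x y => graphonOf G x y - graphonOf G' (φ x) (φ y))
    (u := fun p q => adjKernel G p.1 q.1 - adjKernel G' p.2 q.2) <| by
    filter_upwards [mem_Ico] with x hx
    filter_upwards [mem_Ico] with y hy
    rw [graphonOf_eq_adjKernel G hx.1 hy.1, graphonOf_eq_adjKernel G' hx.2 hy.2]).1 le_rfl
  rw [homDensityFin_eq_decoratedDensity, homDensityFin_eq_decoratedDensity, ← fst_law, ← snd_law,
    decoratedDensity_map, decoratedDensity_map]
  exact abs_decoratedDensity_sub_le (fun _ => lt_of_mem_edgePairs)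
    (fun _ _ _ => adjKernel_mem_Icc G _ _) (fun _ _ _ => adjKernel_mem_Icc G' _ _) fun _ _ => cut

lemma abs_homDensityFin_sub_le_cutDist (F : SimpleGraph (Fin m)) (G : SimpleGraph (Fin n))
    (G' : SimpleGraph (Fin n')) :
    |homDensityFin F G - homDensityFin F G'| ≤
      (edgePairs F).card * cutDist (graphonOf G) (graphonOf G') := by
  rw [cutDist, ← smul_eq_mul, ← Real.sInf_smul_of_nonneg (Nat.cast_nonneg _)]
  refine le_csInf (Nonempty.smul_set
    ⟨_, exchange (Equiv.refl (Fin 1)), isInvMeasurePreserving_exchange _, rfl⟩) ?_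
  rintro _ ⟨_, ⟨φ, hφ, rfl⟩, rfl⟩
  exact abs_homDensityFin_sub_le_cutNorm hφ.2.1 F G G'

lemma exists_tendsto_homDensityFin {N : ℕ → ℕ} {G : ∀ i, SimpleGraph (Fin (N i))}
    (hN : ∀ᶠ i in atTop, 0 < N i)
    (h : ∀ ε : ℝ, 0 < ε → ∃ M : ℕ, ∀ i ≥ M, ∀ j ≥ M,
      cutDist (graphonOf (G i)) (graphonOf (G j)) ≤ ε) (F : SimpleGraph (Fin m)) :
    ∃ L : ℝ, Tendsto (fun i => homDensityFin F (G i)) atTop (nhds L) := by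
  refine cauchySeq_tendsto_of_complete (Metric.cauchySeq_iff.2 fun ε hε => ?_)
  obtain ⟨δ, hδ, hδε⟩ : ∃ δ > 0, (edgePairs F).card * δ < ε := exists_pos_mul_lt hε _
  obtain ⟨M, hM⟩ := h δ hδ
  obtain ⟨M', hM'⟩ := eventually_atTop.1 hN
  refine ⟨max M M', fun i hi j hj => ?_⟩
  have := NeZero.of_pos (hM' i (le_of_max_le_right hi))
  have := NeZero.of_pos (hM' j (le_of_max_le_right hj))
  rw [Real.dist_eq]
  refine (abs_homDensityFin_sub_le_cutDist F (G i) (G j)).trans_lt (lt_of_le_of_lt ?_ hδε)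
  gcongr
  exact hM i (le_of_max_le_left hi) j (le_of_max_le_left hj)

end HomDensity

end GraphLimit

theorem graph_conv_iff_cauchy_cutDist_general (N : ℕ → ℕ) (G : ∀ i, SimpleGraph (Fin (N i)))
    (hN : ∀ᶠ i in atTop, 0 < N i) :
    (∀ (m : ℕ) (F : SimpleGraph (Fin m)), ∃ L : ℝ,
        Tendsto (fun i => homDensityFin F (G i)) atTop (nhds L)) ↔
    (∀ ε : ℝ, 0 < ε → ∃ M : ℕ, ∀ i ≥ M, ∀ j ≥ M,
        cutDist (graphonOf (G i)) (graphonOf (G j)) ≤ ε) :=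
  ⟨fun h _ hε => GraphLimit.exists_forall_cutDist_le hN h hε,
    fun h _ F => GraphLimit.exists_tendsto_homDensityFin hN h F⟩

/-- A sequence of finite simple graphs with `|V(G_n)| → ∞` is convergent (all homomorphism
densities converge) if and only if it is Cauchy in the cut distance `δ_□`. -/
theorem graph_conv_iff_cauchy_cutDist (N : ℕ → ℕ) (G : ∀ i, SimpleGraph (Fin (N i)))
    (hN : Filter.Tendsto N Filter.atTop Filter.atTop) :
    (∀ (m : ℕ) (F : SimpleGraph (Fin m)), ∃ L : ℝ,
        Filter.Tendsto (fun i => homDensityFin F (G i)) Filter.atTop (nhds L)) ↔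
    (∀ ε : ℝ, 0 < ε → ∃ M : ℕ, ∀ i ≥ M, ∀ j ≥ M,
        cutDist (graphonOf (G i)) (graphonOf (G j)) ≤ ε) :=
  graph_conv_iff_cauchy_cutDist_general N G (hN.eventually_gt_atTop 0)
end
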